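/- Let n ≥ 3, N = 2^⌊n/2⌋, and let α₁,…,αₙ be complex N×N matrices satisfying the Clifford relations. Let ψ : B₁ → ℂᴺ be of class C^{1,α} on the open unit ball B₁ ⊂ ℝⁿ for some α ∈ (0,1), not identically zero, and satisfying the critical Dirac equation Dψ(x) = |ψ(x)|^{2/(n−1)} ψ(x) pointwise on B₁. Then the nodal set Z(ψ) = { x ∈ B₁ : ψ(x) = 0 } has Hausdorff dimension at most n − 2. -/

import Mathlib

open MeasureTheory Metric Filter Matrix
open scoped ENNReal NNReal

noncomputable section

/-- The Clifford anticommutation relations `αⱼαₖ + αₖαⱼ = -2 δⱼₖ Id`. -/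
def CliffordRel {n N : ℕ} (α : Fin n → Matrix (Fin N) (Fin N) ℂ) : Prop :=
  ∀ j k, α j * α k + α k * α j = (-2 : ℂ) • (if j = k then (1 : Matrix (Fin N) (Fin N) ℂ) else 0)

/-- The Euclidean Dirac operator `Dψ = Σⱼ αⱼ ∂ⱼψ`. -/
def diracOp {n N : ℕ} (α : Fin n → Matrix (Fin N) (Fin N) ℂ)
    (ψ : EuclideanSpace ℝ (Fin n) → EuclideanSpace ℂ (Fin N))
    (x : EuclideanSpace ℝ (Fin n)) : EuclideanSpace ℂ (Fin N) :=
  ∑ j : Fin n, Matrix.toEuclideanLin (α j) (fderiv ℝ ψ x (EuclideanSpace.single j (1:ℝ)))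

structure FreqData {H : Type*} [NormedAddCommGroup H] [InnerProductSpace ℝ H]
    (u a f : ℝ → H) (C R : ℝ) : Prop where
  hC : 0 ≤ C
  der : ∀ r ∈ Set.Ioo 0 R, HasDerivAt u (r⁻¹ • (a r + f r)) r
  cont : Continuous a
  symm : ∀ r s, inner ℝ (a s) (u r) = inner ℝ (u s) (a r)
  bd : ∀ r ∈ Set.Ioo 0 R, ‖f r‖ ≤ C * r * ‖u r‖

def freqN {H : Type*} [NormedAddCommGroup H] [InnerProductSpace ℝ H]
    (u a : ℝ → H) (r : ℝ) : ℝ := inner ℝ (a r) (u r) / ‖u r‖ ^ 2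

namespace FreqData
variable {H : Type*} [NormedAddCommGroup H] [InnerProductSpace ℝ H]
  {u a f : ℝ → H} {C R : ℝ}

lemma derH (h : FreqData u a f C R) {r : ℝ} (hr : r ∈ Set.Ioo 0 R) :
    HasDerivAt (fun s => ‖u s‖ ^ 2) (2 * r⁻¹ * inner ℝ (u r) (a r + f r)) r := by
  have := (h.der r hr).norm_sq
  rw [inner_smul_right] at this
  convert this using 1
  ring

lemma derI (h : FreqData u a f C R) {r : ℝ} (hr : r ∈ Set.Ioo 0 R) :
    HasDerivAt (fun s => inner ℝ (a s) (u s)) (2 * r⁻¹ * inner ℝ (a r) (a r + f r)) r := by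
  rw [hasDerivAt_iff_tendsto_slope]
  have h1 := (hasDerivAt_iff_tendsto_slope.1 (h.der r hr))
  have h2 : Tendsto (fun s => a s + a r) (nhdsWithin r {r}ᶜ) (nhds (a r + a r)) :=
    ((h.cont.tendsto r).mono_left nhdsWithin_le_nhds).add_const _
  have h3 := h2.inner (𝕜 := ℝ) h1
  have e : (2 * r⁻¹ * inner ℝ (a r) (a r + f r) : ℝ)
      = inner ℝ (a r + a r) (r⁻¹ • (a r + f r)) := by
    rw [inner_smul_right, inner_add_left]; ring
  rw [e]
  refine h3.congr fun s => ?_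
  simp only [slope, vsub_eq_sub, smul_eq_mul, inner_smul_right, inner_add_left, inner_sub_right]
  rw [h.symm s r, real_inner_comm (a s) (u r)]
  ring

lemma derN (h : FreqData u a f C R) {r : ℝ} (hr : r ∈ Set.Ioo 0 R) (hu : u r ≠ 0) :
    ∃ d, HasDerivAt (freqN u a) d r ∧
      ‖a r - freqN u a r • u r‖ ^ 2 ≤ (r * d + C ^ 2 * r ^ 2) * ‖u r‖ ^ 2 := by
  have hH : ‖u r‖ ^ 2 ≠ 0 := by simpa using hu
  have hH' : 0 < ‖u r‖ ^ 2 := by positivity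
  have hr0 : (0:ℝ) < r := hr.1
  refine ⟨_, (h.derI hr).div (h.derH hr) hH, ?_⟩
  set N := freqN u a r with hN
  have hI : inner ℝ (a r) (u r) = N * ‖u r‖ ^ 2 := by
    rw [hN, freqN]; field_simp
  rw [hI]
  have hI' : inner ℝ (u r) (a r) = N * ‖u r‖ ^ 2 := by rw [real_inner_comm, hI]
  have hb := h.bd r hr
  have hf2 : ‖f r‖ ^ 2 ≤ C ^ 2 * r ^ 2 * ‖u r‖ ^ 2 := by
    calc ‖f r‖ ^ 2 ≤ (C * r * ‖u r‖) ^ 2 := by gcongr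
      _ = _ := by ring
  have key : (r * ((2 * r⁻¹ * inner ℝ (a r) (a r + f r) * ‖u r‖ ^ 2 -
      N * ‖u r‖ ^ 2 * (2 * r⁻¹ * inner ℝ (u r) (a r + f r))) / (‖u r‖ ^ 2) ^ 2)
        + C ^ 2 * r ^ 2) * ‖u r‖ ^ 2
      = 2 * (inner ℝ (a r) (a r + f r) - N * inner ℝ (u r) (a r + f r))
        + C ^ 2 * r ^ 2 * ‖u r‖ ^ 2 := by
    field_simp
  rw [key]
  have e1 : ‖a r - N • u r‖ ^ 2 = ‖a r‖ ^ 2 - N ^ 2 * ‖u r‖ ^ 2 := by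
    rw [norm_sub_sq_real, inner_smul_right, hI, norm_smul, mul_pow, Real.norm_eq_abs, sq_abs]; ring
  have e2 : 0 ≤ ‖(a r - N • u r) + f r‖ ^ 2 := by positivity
  rw [norm_add_sq_real, inner_sub_left, inner_smul_left, e1] at e2
  simp only [conj_trivial] at e2
  rw [inner_add_right, inner_add_right, hI', real_inner_self_eq_norm_sq, e1]
  nlinarith

lemma mono (h : FreqData u a f C R) {r₁ r₂ : ℝ} (h1 : 0 < r₁) (h12 : r₁ ≤ r₂) (h2 : r₂ < R)
    (hu : ∀ r ∈ Set.Icc r₁ r₂, u r ≠ 0) :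
    freqN u a r₁ + C ^ 2 * r₁ ^ 2 / 2 ≤ freqN u a r₂ + C ^ 2 * r₂ ^ 2 / 2 := by
  have hd : ∀ r ∈ Set.Icc r₁ r₂, ∃ d, HasDerivAt (fun r => freqN u a r + C ^ 2 * r ^ 2 / 2) d r
      ∧ 0 ≤ d := by
    intro r hr
    have hr' : r ∈ Set.Ioo 0 R := ⟨by linarith [hr.1], by linarith [hr.2]⟩
    obtain ⟨d, hd, hd'⟩ := h.derN hr' (hu r hr)
    refine ⟨d + C ^ 2 * (2 * r) / 2, ?_, ?_⟩
    · have : HasDerivAt (fun r : ℝ => C ^ 2 * r ^ 2 / 2) (C ^ 2 * (2 * r) / 2) r := by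
        have := ((hasDerivAt_pow 2 r).const_mul (C ^ 2)).div_const 2
        simpa using this
      exact hd.add this
    · have hH : 0 < ‖u r‖ ^ 2 := by have := hu r hr; positivity
      have h0 : 0 ≤ (r * d + C ^ 2 * r ^ 2) * ‖u r‖ ^ 2 := le_trans (by positivity) hd'
      have h00 : 0 ≤ r * (d + C ^ 2 * r) := by
        have := nonneg_of_mul_nonneg_left h0 hH
        nlinarith
      have := nonneg_of_mul_nonneg_right h00 hr'.1
      linarith
  refine monotoneOn_of_deriv_nonneg (D := Set.Icc r₁ r₂)
    (f := fun r => freqN u a r + C ^ 2 * r ^ 2 / 2) (convex_Icc _ _) ?_ ?_ ?_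
    (Set.left_mem_Icc.2 h12) (Set.right_mem_Icc.2 h12) h12
  · intro r hr
    obtain ⟨d, hd, _⟩ := hd r hr
    exact hd.continuousAt.continuousWithinAt
  · intro r hr
    obtain ⟨d, hd, _⟩ := hd r (interior_subset hr)
    exact hd.differentiableAt.differentiableWithinAt
  · intro r hr
    obtain ⟨d, hd, h0⟩ := hd r (interior_subset hr)
    rw [hd.deriv]; exact h0

lemma growth (h : FreqData u a f C R) {r₁ r₂ K : ℝ} (h1 : 0 < r₁) (h12 : r₁ ≤ r₂) (h2 : r₂ < R)
    (hu : ∀ r ∈ Set.Ioc r₁ r₂, u r ≠ 0) (hK : ∀ r ∈ Set.Ioc r₁ r₂, freqN u a r ≤ K) :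
    ‖u r₂‖ ^ 2 * r₂ ^ (-(2 * K)) * Real.exp (-(2 * C * r₂)) ≤
      ‖u r₁‖ ^ 2 * r₁ ^ (-(2 * K)) * Real.exp (-(2 * C * r₁)) := by
  have hd : ∀ r ∈ Set.Icc r₁ r₂, HasDerivAt
      (fun r => ‖u r‖ ^ 2 * r ^ (-(2 * K)) * Real.exp (-(2 * C * r)))
      (((2 * r⁻¹ * inner ℝ (u r) (a r + f r)) * r ^ (-(2 * K)) +
        ‖u r‖ ^ 2 * (-(2 * K) * r ^ (-(2 * K) - 1))) * Real.exp (-(2 * C * r))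
        + ‖u r‖ ^ 2 * r ^ (-(2 * K)) * (Real.exp (-(2 * C * r)) * (-(2 * C)))) r := by
    intro r hr
    have hr' : r ∈ Set.Ioo 0 R := ⟨by linarith [hr.1], by linarith [hr.2]⟩
    have e : HasDerivAt (fun r : ℝ => -(2 * C * r)) (-(2 * C)) r := by
      simpa using ((hasDerivAt_id r).const_mul (2 * C)).fun_neg
    exact ((h.derH hr').mul (Real.hasDerivAt_rpow_const (Or.inl hr'.1.ne'))).mul e.exp
  refine antitoneOn_of_deriv_nonpos (D := Set.Icc r₁ r₂)
    (f := fun r => ‖u r‖ ^ 2 * r ^ (-(2 * K)) * Real.exp (-(2 * C * r)))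
    (convex_Icc _ _) ?_ ?_ ?_
    (Set.left_mem_Icc.2 h12) (Set.right_mem_Icc.2 h12) h12
  · intro r hr
    exact (hd r hr).continuousAt.continuousWithinAt
  · intro r hr
    exact (hd r (interior_subset hr)).differentiableAt.differentiableWithinAt
  · intro r hr
    rw [(hd r (interior_subset hr)).deriv]
    rw [interior_Icc] at hr
    have hr' : r ∈ Set.Ioo 0 R := ⟨by linarith [hr.1], by linarith [hr.2]⟩
    have hr0 := hr'.1
    have hN := hK r ⟨hr.1, hr.2.le⟩
    have hur := hu r ⟨hr.1, hr.2.le⟩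
    have hH : 0 < ‖u r‖ ^ 2 := by positivity
    have hI' : inner ℝ (u r) (a r) = freqN u a r * ‖u r‖ ^ 2 := by
      rw [real_inner_comm, freqN]; field_simp
    have hb := h.bd r hr'
    have hcs : inner ℝ (u r) (f r) ≤ C * r * ‖u r‖ ^ 2 := by
      calc inner ℝ (u r) (f r) ≤ ‖u r‖ * ‖f r‖ := real_inner_le_norm _ _
        _ ≤ ‖u r‖ * (C * r * ‖u r‖) := by gcongr
        _ = _ := by ring
    rw [Real.rpow_sub_one hr0.ne', inner_add_right, hI']
    have e : ((2 * r⁻¹ * (freqN u a r * ‖u r‖ ^ 2 + inner ℝ (u r) (f r))) * r ^ (-(2 * K)) +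
        ‖u r‖ ^ 2 * (-(2 * K) * (r ^ (-(2 * K)) / r))) * Real.exp (-(2 * C * r))
        + ‖u r‖ ^ 2 * r ^ (-(2 * K)) * (Real.exp (-(2 * C * r)) * (-(2 * C)))
        = (r ^ (-(2 * K)) * Real.exp (-(2 * C * r)) * (2 * r⁻¹)) *
          ((freqN u a r - K) * ‖u r‖ ^ 2 + (inner ℝ (u r) (f r) - C * r * ‖u r‖ ^ 2)) := by
      field_simp
      ring
    rw [e]
    apply mul_nonpos_of_nonneg_of_nonpos
    · positivity
    · nlinarith

lemma nonvanish (h : FreqData u a f C R) {r₀ : ℝ} (h0 : 0 < r₀) (h0R : r₀ < R) (hu : u r₀ ≠ 0) :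
    ∀ r ∈ Set.Ioc 0 r₀, u r ≠ 0 := by
  by_contra! hcon
  obtain ⟨s, hs, hs0⟩ := hcon
  -- the largest zero below `r₀`
  set Zs : Set ℝ := {r | r ∈ Set.Icc s r₀ ∧ u r = 0} with hZ
  have hcont : ContinuousOn u (Set.Icc s r₀) := fun r hr =>
    (h.der r ⟨by linarith [hr.1, hs.1], by linarith [hr.2]⟩).continuousAt.continuousWithinAt
  have hcl : IsClosed Zs := by
    have := hcont.preimage_isClosed_of_isClosed isClosed_Icc (isClosed_singleton (x := (0:H)))
    exact this
  have hcp : IsCompact Zs := isCompact_Icc.of_isClosed_subset hcl (fun x hx => hx.1)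
  have hne : Zs.Nonempty := ⟨s, ⟨le_rfl, hs.2⟩, hs0⟩
  obtain ⟨r₁, hr₁, hmax⟩ := hcp.exists_isGreatest hne
  have h1 : 0 < r₁ := by linarith [hr₁.1.1, hs.1]
  have h12 : r₁ ≤ r₀ := hr₁.1.2
  have hnz : ∀ r ∈ Set.Ioc r₁ r₀, u r ≠ 0 := by
    intro r hr hr0
    have : r ≤ r₁ := hmax ⟨⟨by linarith [hr.1, hr₁.1.1], hr.2⟩, hr0⟩
    linarith [hr.1]
  have hK : ∀ r ∈ Set.Ioc r₁ r₀, freqN u a r ≤ freqN u a r₀ + C ^ 2 * r₀ ^ 2 / 2 := by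
    intro r hr
    have := h.mono (r₁ := r) (r₂ := r₀) (by linarith [hr.1]) hr.2 h0R
      (fun x hx => hnz x ⟨by linarith [hr.1, hx.1], hx.2⟩)
    have : 0 ≤ C ^ 2 * r ^ 2 / 2 := by positivity
    linarith
  have := h.growth h1 h12 h0R hnz hK
  rw [hr₁.2] at this
  have h3 : 0 < ‖u r₀‖ ^ 2 * r₀ ^ (-(2 * (freqN u a r₀ + C ^ 2 * r₀ ^ 2 / 2))) *
    Real.exp (-(2 * C * r₀)) := by positivity
  simp at this
  linarith

lemma lower (h : FreqData u a f C R) (hu : ∀ r ∈ Set.Ioo 0 R, u r ≠ 0) {L : ℝ}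
    (hL : ∀ r ∈ Set.Ioo 0 R, ‖u r‖ ≤ L * r) {r₀ : ℝ} (h0 : r₀ ∈ Set.Ioo 0 R) :
    1 ≤ freqN u a r₀ + C ^ 2 * r₀ ^ 2 / 2 := by
  by_contra! hcon
  set K := freqN u a r₀ + C ^ 2 * r₀ ^ 2 / 2 with hKdef
  set c := ‖u r₀‖ ^ 2 * r₀ ^ (-(2 * K)) * Real.exp (-(2 * C * r₀)) with hc
  have hr₀ := h0.1
  have hcpos : 0 < c := by have := hu r₀ h0; positivity
  have hbound : ∀ r ∈ Set.Ioc 0 r₀, c ≤ L ^ 2 * r ^ (2 - 2 * K) := by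
    intro r hr
    have hr0 := hr.1
    have hrR : r ∈ Set.Ioo 0 R := ⟨hr.1, by linarith [hr.2, h0.2]⟩
    have hK : ∀ s ∈ Set.Ioc r r₀, freqN u a s ≤ K := by
      intro s hs
      have := h.mono (r₁ := s) (r₂ := r₀) (by linarith [hs.1]) hs.2 h0.2
        (fun x hx => hu x ⟨by linarith [hs.1, hx.1], by linarith [hx.2, h0.2]⟩)
      have : 0 ≤ C ^ 2 * s ^ 2 / 2 := by positivity
      linarith
    have := h.growth hr.1 hr.2 h0.2
      (fun x hx => hu x ⟨by linarith [hx.1], by linarith [hx.2, h0.2]⟩) hK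
    refine this.trans ?_
    have e1 : Real.exp (-(2 * C * r)) ≤ 1 := by
      rw [Real.exp_le_one_iff]; have := h.hC; nlinarith [mul_nonneg this hr0.le]
    have e2 : ‖u r‖ ^ 2 ≤ L ^ 2 * r ^ 2 := by
      rw [← mul_pow]; have := hL r hrR; gcongr
    have e3 : r ^ (2 - 2 * K) = r ^ 2 * r ^ (-(2 * K)) := by
      rw [sub_eq_add_neg, Real.rpow_add hr0, Real.rpow_two]
    rw [e3]
    calc ‖u r‖ ^ 2 * r ^ (-(2 * K)) * Real.exp (-(2 * C * r))
        ≤ (L ^ 2 * r ^ 2) * r ^ (-(2 * K)) * 1 := by gcongr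
      _ = _ := by ring
  have hlim : Tendsto (fun r : ℝ => L ^ 2 * r ^ (2 - 2 * K)) (nhdsWithin 0 (Set.Ioi 0)) (nhds 0) := by
    have h1 : ContinuousAt (fun r : ℝ => L ^ 2 * r ^ (2 - 2 * K)) 0 :=
      (Real.continuousAt_rpow_const 0 _ (Or.inr (by linarith))).const_mul _
    have h2 := h1.tendsto
    rw [Real.zero_rpow (by linarith), mul_zero] at h2
    exact h2.mono_left nhdsWithin_le_nhds
  have : c ≤ 0 := by
    refine ge_of_tendsto hlim ?_
    filter_upwards [Ioc_mem_nhdsGT hr₀] with r hr using hbound r hr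
  linarith

/-- pinching: between `2 * r` and `3 * r` there is a scale where `a + f` is almost `q u`. -/
lemma pinch (h : FreqData u a f C R) {r q δ : ℝ} (hr : 0 < r) (hrR : 3 * r < R) (hδ : 0 ≤ δ)
    (hu : ∀ s ∈ Set.Ioo 0 R, u s ≠ 0) (hN : ∀ s ∈ Set.Icc (2 * r) (3 * r), |freqN u a s - q| ≤ δ) :
    ∃ s ∈ Set.Ioo (2 * r) (3 * r), ‖a s + f s - q • u s‖ ^ 2 ≤
      3 * (6 * δ + δ ^ 2 + 18 * C ^ 2 * r ^ 2) * ‖u s‖ ^ 2 := by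
  have hd : ∀ s ∈ Set.Icc (2 * r) (3 * r), ∃ d, HasDerivAt (freqN u a) d s ∧
      ‖a s - freqN u a s • u s‖ ^ 2 ≤ (s * d + C ^ 2 * s ^ 2) * ‖u s‖ ^ 2 := fun s hs =>
    have hs' : s ∈ Set.Ioo 0 R := ⟨by linarith [hs.1], by linarith [hs.2]⟩
    h.derN hs' (hu s hs')
  choose! d hd hd' using hd
  obtain ⟨s, hs, hsd⟩ := exists_hasDerivAt_eq_slope (freqN u a) d (show 2 * r < 3 * r by linarith)
    (fun s hs => (hd s hs).continuousAt.continuousWithinAt) (fun s hs => hd s ⟨hs.1.le, hs.2.le⟩)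
  refine ⟨s, hs, ?_⟩
  have hsI : s ∈ Set.Icc (2 * r) (3 * r) := ⟨hs.1.le, hs.2.le⟩
  have hs' : s ∈ Set.Ioo 0 R := ⟨by linarith [hs.1], by linarith [hs.2]⟩
  have h2 := abs_le.1 (hN (2 * r) ⟨le_rfl, by linarith⟩)
  have h3 := abs_le.1 (hN (3 * r) ⟨by linarith, le_rfl⟩)
  have hs1 := hs'.1
  have hs2 := hs.2
  have hds : s * d s ≤ 6 * δ := by
    rw [hsd, show 3 * r - 2 * r = r by ring, mul_div_assoc', div_le_iff₀ hr]
    have : freqN u a (3 * r) - freqN u a (2 * r) ≤ 2 * δ := by linarith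
    calc s * (freqN u a (3 * r) - freqN u a (2 * r)) ≤ s * (2 * δ) := by gcongr
      _ ≤ (3 * r) * (2 * δ) := by gcongr
      _ = _ := by ring
  have hss : C ^ 2 * s ^ 2 ≤ 9 * C ^ 2 * r ^ 2 := by
    calc C ^ 2 * s ^ 2 ≤ C ^ 2 * (3 * r) ^ 2 := by gcongr
      _ = _ := by ring
  have b1 : ‖a s - freqN u a s • u s‖ ^ 2 ≤ (6 * δ + 9 * C ^ 2 * r ^ 2) * ‖u s‖ ^ 2 := by
    refine (hd' s hsI).trans ?_
    gcongr
  have b2 : ‖(freqN u a s - q) • u s‖ ^ 2 ≤ δ ^ 2 * ‖u s‖ ^ 2 := by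
    rw [norm_smul, mul_pow, Real.norm_eq_abs]
    have := hN s hsI
    gcongr
  have b3 : ‖f s‖ ^ 2 ≤ 9 * C ^ 2 * r ^ 2 * ‖u s‖ ^ 2 := by
    calc ‖f s‖ ^ 2 ≤ (C * s * ‖u s‖) ^ 2 := by have := h.bd s hs'; gcongr
      _ = C ^ 2 * s ^ 2 * ‖u s‖ ^ 2 := by ring
      _ ≤ _ := by gcongr
  have e : a s + f s - q • u s = (a s - freqN u a s • u s) + (freqN u a s - q) • u s + f s := by
    rw [sub_smul]; abel
  rw [e]
  have hn := norm_add₃_le (a := a s - freqN u a s • u s) (b := (freqN u a s - q) • u s) (c := f s)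
  set x := ‖a s - freqN u a s • u s‖
  set y := ‖(freqN u a s - q) • u s‖
  set z := ‖f s‖
  calc _ ≤ (x + y + z) ^ 2 := by gcongr
    _ ≤ 3 * (x ^ 2 + y ^ 2 + z ^ 2) := by nlinarith [sq_nonneg (x - y), sq_nonneg (y - z), sq_nonneg (x - z)]
    _ ≤ _ := by nlinarith

end FreqData

lemma cover_iterate {X : Type*} [MetricSpace X] (A : Set X) (M : ℕ) (θ r₀ : ℝ)
    (hθ : 0 < θ) (hθ1 : θ < 1)
    (hcov : ∀ x ∈ A, ∀ r ∈ Set.Ioc 0 r₀, ∃ F : Finset X, F.card ≤ M ∧ ↑F ⊆ A ∧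
      A ∩ closedBall x r ⊆ ⋃ c ∈ F, closedBall c (θ * r)) (k : ℕ) :
    ∀ x ∈ A, ∀ r ∈ Set.Ioc 0 r₀, ∃ F : Finset X, F.card ≤ M ^ k ∧ ↑F ⊆ A ∧
      A ∩ closedBall x r ⊆ ⋃ c ∈ F, closedBall c (θ ^ k * r) := by
  classical
  induction k with
  | zero =>
    intro x hx r hr
    refine ⟨{x}, by simp, by simpa using hx, ?_⟩
    simp
  | succ k ih =>
    intro x hx r hr
    obtain ⟨F, hF, hFA, hFc⟩ := hcov x hx r hr
    have hr' : θ * r ∈ Set.Ioc 0 r₀ := by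
      refine ⟨mul_pos hθ hr.1, ?_⟩
      nlinarith [hr.1, hr.2]
    have ih' : ∀ c ∈ A, ∃ F : Finset X, F.card ≤ M ^ k ∧ ↑F ⊆ A ∧
      A ∩ closedBall c (θ * r) ⊆ ⋃ c ∈ F, closedBall c (θ ^ k * (θ * r)) :=
      fun c hc => ih c hc _ hr'
    choose! G hG hGA hGc using ih'
    refine ⟨F.biUnion G, ?_, ?_, ?_⟩
    · refine (Finset.card_biUnion_le_card_mul F G (M ^ k) (fun c hc => hG c (hFA hc))).trans ?_
      rw [pow_succ, mul_comm]
      gcongr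
    · intro y hy
      simp only [Finset.coe_biUnion, Set.mem_iUnion] at hy
      obtain ⟨c, hc, hy⟩ := hy
      exact hGA c (hFA hc) hy
    · intro y hy
      have h1 := hFc hy
      simp only [Set.mem_iUnion] at h1
      obtain ⟨c, hc, hyc⟩ := h1
      have h2 := hGc c (hFA hc) ⟨hy.1, hyc⟩
      simp only [Set.mem_iUnion] at h2 ⊢
      obtain ⟨d, hd, hyd⟩ := h2
      refine ⟨d, Finset.mem_biUnion.2 ⟨c, hc, hd⟩, ?_⟩
      rwa [pow_succ, mul_assoc]

lemma cover_dim {X : Type*} [MetricSpace X] [SecondCountableTopology X]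
    (A : Set X) (M : ℕ) (θ r₀ : ℝ)
    (hθ : 0 < θ) (hθ1 : θ < 1) (hr₀ : 0 < r₀) (s : ℝ≥0) (hM : (M : ℝ) * θ ^ (s : ℝ) ≤ 1)
    (hcov : ∀ x ∈ A, ∀ r ∈ Set.Ioc 0 r₀, ∃ F : Finset X, F.card ≤ M ∧ ↑F ⊆ A ∧
      A ∩ closedBall x r ⊆ ⋃ c ∈ F, closedBall c (θ * r)) :
    dimH A ≤ s := by
  borelize X
  have hloc : ∀ x ∈ A, dimH (A ∩ closedBall x r₀) ≤ s := by
    intro x hx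
    apply dimH_le_of_hausdorffMeasure_ne_top
    have h := fun k => cover_iterate A M θ r₀ hθ hθ1 hcov k x hx r₀ ⟨hr₀, le_rfl⟩
    choose F hF hFA hFc using h
    have hdi : ∀ k (c : X), ediam (closedBall c (θ ^ k * r₀)) ≤ ENNReal.ofReal (2 * (θ ^ k * r₀)) := by
      intro k c
      refine Metric.ediam_le fun a ha b hb => ?_
      rw [edist_dist]
      apply ENNReal.ofReal_le_ofReal
      have := dist_triangle_right a b c
      rw [mem_closedBall] at ha hb
      linarith
    have hle := Measure.hausdorffMeasure_le_liminf_sum (β := ℕ) (ι := fun k => F k) (s : ℝ)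
      (A ∩ closedBall x r₀) (l := atTop) (fun k => ENNReal.ofReal (2 * (θ ^ k * r₀))) ?_
      (fun k c => closedBall (c : X) (θ ^ k * r₀))
      (Eventually.of_forall fun k c => hdi k c) (Eventually.of_forall fun k => ?_)
    rotate_left
    · have : Tendsto (fun k : ℕ => 2 * (θ ^ k * r₀)) atTop (nhds (2 * (0 * r₀))) :=
        ((tendsto_pow_atTop_nhds_zero_of_lt_one hθ.le hθ1).mul_const _).const_mul _
      simpa using ENNReal.tendsto_ofReal this
    · refine (hFc k).trans ?_
      intro y hy
      simp only [Set.mem_iUnion] at hy ⊢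
      obtain ⟨c, hc, hy⟩ := hy
      exact ⟨⟨c, hc⟩, hy⟩
    refine ne_top_of_le_ne_top (b := ENNReal.ofReal ((2 * r₀) ^ (s : ℝ))) ENNReal.ofReal_ne_top ?_
    refine hle.trans ?_
    refine liminf_le_of_le (by isBoundedDefault) ?_
    intro b hb
    obtain ⟨k, hk⟩ := hb.exists
    refine hk.trans ?_
    calc ∑ c : F k, ediam (closedBall (c : X) (θ ^ k * r₀)) ^ (s : ℝ)
        ≤ ∑ c : F k, ENNReal.ofReal ((2 * (θ ^ k * r₀)) ^ (s : ℝ)) := by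
          refine Finset.sum_le_sum fun c _ => ?_
          rw [← ENNReal.ofReal_rpow_of_pos (by positivity)]
          gcongr
          exact hdi k c
      _ = ENNReal.ofReal ((F k).card * (2 * (θ ^ k * r₀)) ^ (s : ℝ)) := by
          rw [ENNReal.ofReal_mul (by positivity)]
          simp
      _ ≤ _ := by
          apply ENNReal.ofReal_le_ofReal
          have e : (2 * (θ ^ k * r₀)) ^ (s : ℝ) = (θ ^ (s : ℝ)) ^ k * (2 * r₀) ^ (s : ℝ) := by
            rw [show 2 * (θ ^ k * r₀) = θ ^ k * (2 * r₀) by ring,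
              Real.mul_rpow (by positivity) (by positivity), ← Real.rpow_natCast θ k,
              ← Real.rpow_natCast, ← Real.rpow_mul hθ.le, ← Real.rpow_mul hθ.le, mul_comm (k : ℝ)]
          rw [e, ← mul_assoc]
          have h1 : ((F k).card : ℝ) * (θ ^ (s : ℝ)) ^ k ≤ 1 := by
            calc ((F k).card : ℝ) * (θ ^ (s : ℝ)) ^ k ≤ (M : ℝ) ^ k * (θ ^ (s : ℝ)) ^ k := by
                  gcongr; exact_mod_cast hF k
              _ = ((M : ℝ) * θ ^ (s : ℝ)) ^ k := by rw [mul_pow]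
              _ ≤ 1 := pow_le_one₀ (by positivity) hM
          calc _ ≤ 1 * (2 * r₀) ^ (s : ℝ) := by gcongr
            _ = _ := one_mul _
  obtain ⟨t, htA, htc, ht⟩ := TopologicalSpace.countable_cover_nhdsWithin (s := A)
    (f := fun x => closedBall x r₀)
    (fun x hx => mem_nhdsWithin_of_mem_nhds (closedBall_mem_nhds x hr₀))
  have : A ⊆ ⋃ x ∈ t, A ∩ closedBall x r₀ := by
    intro y hy
    have := ht hy
    simp only [Set.mem_iUnion] at this ⊢
    obtain ⟨x, hx, hy'⟩ := this
    exact ⟨x, hx, hy, hy'⟩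
  refine (dimH_mono this).trans ?_
  rw [dimH_bUnion htc]
  exact iSup₂_le fun x hx => hloc x (htA hx)

lemma grid_cover {n : ℕ} (b : OrthonormalBasis (Fin n) ℝ (EuclideanSpace ℝ (Fin n)))
    (S : Set (EuclideanSpace ℝ (Fin n))) (x₀ : EuclideanSpace ℝ (Fin n)) (r : ℝ) (hr : 0 < r)
    (m : ℕ) (hm : 1 ≤ m) (hS : S ⊆ closedBall x₀ r) (i₁ i₂ : Fin n) (hi : i₁ ≠ i₂)
    (h1 : ∀ y ∈ S, |inner ℝ (b i₁) (y - x₀)| ≤ r / m)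
    (h2 : ∀ y ∈ S, |inner ℝ (b i₂) (y - x₀)| ≤ r / m) :
    ∃ F : Finset (EuclideanSpace ℝ (Fin n)), F.card ≤ 9 * (2 * m + 1) ^ (n - 2) ∧ ↑F ⊆ S ∧
      S ⊆ ⋃ c ∈ F, closedBall c (Real.sqrt n / m * r) := by
  classical
  have hm' : (0:ℝ) < m := by exact_mod_cast hm
  set g : EuclideanSpace ℝ (Fin n) → Fin n → ℤ := fun y i => ⌊inner ℝ (b i) (y - x₀) * (m / r)⌋ with hg
  set T : Finset (Fin n → ℤ) := Fintype.piFinset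
    (fun i => if i = i₁ ∨ i = i₂ then Finset.Icc (-1) 1 else Finset.Icc (-(m:ℤ)) m) with hT
  have hcard : T.card = 9 * (2 * m + 1) ^ (n - 2) := by
    rw [hT, Fintype.card_piFinset]
    have : ∀ i : Fin n, (if i = i₁ ∨ i = i₂ then Finset.Icc (-1:ℤ) 1
        else Finset.Icc (-(m:ℤ)) m).card = if i = i₁ ∨ i = i₂ then 3 else 2 * m + 1 := by
      intro i
      split_ifs
      · rfl
      · rw [Int.card_Icc]; omega
    rw [Finset.prod_congr rfl (fun i _ => this i), Finset.prod_ite, Finset.prod_const,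
      Finset.prod_const]
    have hf : (Finset.univ.filter (fun i : Fin n => i = i₁ ∨ i = i₂)) = {i₁, i₂} := by
      ext i; simp
    have hc2 : (Finset.univ.filter (fun i : Fin n => i = i₁ ∨ i = i₂)).card = 2 := by
      rw [hf, Finset.card_pair hi]
    have hc3 : (Finset.univ.filter (fun i : Fin n => ¬ (i = i₁ ∨ i = i₂))).card = n - 2 := by
      have := Finset.card_filter_add_card_filter_not (s := (Finset.univ : Finset (Fin n)))
        (fun i : Fin n => i = i₁ ∨ i = i₂)
      rw [hc2, Finset.card_univ, Fintype.card_fin] at this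
      omega
    rw [hc2, hc3]
    norm_num
  have hmaps : ∀ y ∈ S, g y ∈ (T : Set (Fin n → ℤ)) := by
    intro y hy
    rw [hT, Finset.mem_coe, Fintype.mem_piFinset]
    intro i
    have hb : ∀ L : ℕ, |inner ℝ (b i) (y - x₀)| ≤ L * (r / m) → g y i ∈ Finset.Icc (-(L:ℤ)) L := by
      intro L hL
      rw [abs_le] at hL
      have hrm : 0 < r / m := by positivity
      have e : (m / r : ℝ) = (r / m)⁻¹ := by rw [inv_div]
      rw [Finset.mem_Icc]
      constructor
      · rw [hg]; simp only
        rw [Int.le_floor, e, ← div_eq_mul_inv, le_div_iff₀ hrm]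
        push_cast; linarith [hL.1]
      · rw [hg]; simp only
        have : (inner ℝ (b i) (y - x₀) * (m / r) : ℝ) < ((L : ℤ) : ℝ) + 1 := by
          rw [e, ← div_eq_mul_inv, div_lt_iff₀ hrm]
          push_cast; nlinarith [hL.2]
        have := (Int.floor_lt (z := (L:ℤ) + 1)).2 (by push_cast at this ⊢; exact this)
        omega
    split_ifs with hii
    · have := hb 1 (by
        rcases hii with rfl | rfl
        · simpa using h1 y hy
        · simpa using h2 y hy)
      simpa using this
    · apply hb m
      rw [mul_div_cancel₀ _ hm'.ne']
      calc |inner ℝ (b i) (y - x₀)| ≤ ‖b i‖ * ‖y - x₀‖ := abs_real_inner_le_norm _ _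
        _ = ‖y - x₀‖ := by rw [b.norm_eq_one, one_mul]
        _ ≤ r := by rw [← dist_eq_norm]; exact hS hy
  obtain ⟨S', hS'S, hbij⟩ := Set.exists_subset_bijOn S g
  have himg : g '' S ⊆ T := by rintro _ ⟨y, hy, rfl⟩; exact hmaps y hy
  have hfin : (g '' S).Finite := T.finite_toSet.subset himg
  have hfin' : S'.Finite := hbij.finite_iff_finite.2 hfin
  refine ⟨hfin'.toFinset, ?_, by simpa using hS'S, ?_⟩
  · rw [← Set.ncard_eq_toFinset_card S' hfin', ← hcard, ← Set.ncard_coe_finset T]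
    rw [← hbij.injOn.ncard_image, hbij.image_eq]
    exact Set.ncard_le_ncard himg T.finite_toSet
  · intro y hy
    obtain ⟨c, hc, hcy⟩ := hbij.surjOn ⟨y, hy, rfl⟩
    simp only [Set.mem_iUnion]
    refine ⟨c, by simpa using hc, ?_⟩
    rw [mem_closedBall, dist_eq_norm]
    have hco : ∀ i, (inner ℝ (b i) (y - c)) ^ 2 ≤ (r / m) ^ 2 := by
      intro i
      have h3 := Int.abs_sub_lt_one_of_floor_eq_floor (congrFun hcy i)
      have e : inner ℝ (b i) (y - c) = inner ℝ (b i) (y - x₀) - inner ℝ (b i) (c - x₀) := by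
        rw [← inner_sub_right]; congr 1; abel
      have e2 : |inner ℝ (b i) (y - c)| ≤ r / m := by
        rw [← sub_mul, abs_mul, abs_of_pos (show (0:ℝ) < m / r by positivity), abs_sub_comm, ← e] at h3
        have : |inner ℝ (b i) (y - c)| < 1 / (m / r) := by
          rwa [lt_div_iff₀ (by positivity)]
        rw [one_div_div] at this
        exact this.le
      rw [← sq_abs]
      gcongr
    have hsq : ‖y - c‖ ^ 2 ≤ (Real.sqrt n / m * r) ^ 2 := by
      rw [← b.sum_sq_inner_right (y - c)]
      calc _ ≤ ∑ i : Fin n, (r / m) ^ 2 := Finset.sum_le_sum fun i _ => hco i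
        _ = n * (r / m) ^ 2 := by simp
        _ = _ := by
          rw [mul_pow, div_pow, div_pow, Real.sq_sqrt (by positivity)]; ring
    exact le_of_sq_le_sq hsq (by positivity)

/-- the closed unit ball as a compact space -/
abbrev KB (n : ℕ) : Type := closedBall (0 : EuclideanSpace ℝ (Fin n)) 1

instance KB.compact (n : ℕ) : CompactSpace (KB n) :=
  isCompact_iff_compactSpace.1 (isCompact_closedBall _ _)

/-- Lebesgue measure on the closed unit ball -/
def muB (n : ℕ) : Measure (KB n) :=
  Measure.comap Subtype.val (volume : Measure (EuclideanSpace ℝ (Fin n)))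

instance KB.finite (n : ℕ) : IsFiniteMeasure (muB n) := by
  have h := comap_subtype_coe_apply (measurableSet_closedBall (x := (0 : EuclideanSpace ℝ (Fin n)))
    (ε := 1)) volume Set.univ
  refine ⟨lt_of_eq_of_lt h ?_⟩
  refine lt_of_le_of_lt (measure_mono (t := closedBall (0 : EuclideanSpace ℝ (Fin n)) 1) ?_)
    measure_closedBall_lt_top
  rintro _ ⟨z, _, rfl⟩
  exact z.2

section L2
variable {n : ℕ} {E : Type*} [NormedAddCommGroup E] [InnerProductSpace ℝ E]

/-- restriction of a continuous function to the unit ball -/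
def cres (F : EuclideanSpace ℝ (Fin n) → E) (hF : Continuous F) : C(KB n, E) :=
  ⟨fun z => F z, hF.comp continuous_subtype_val⟩

/-- `L²` class on the unit ball -/
def jL : C(KB n, E) →L[ℝ] Lp E 2 (muB n) :=
  ContinuousMap.toLp 2 (muB n) ℝ

lemma jL_inner (F G : EuclideanSpace ℝ (Fin n) → E) (hF : Continuous F) (hG : Continuous G) :
    inner ℝ (jL (cres F hF)) (jL (cres G hG)) =
      ∫ z in closedBall (0 : EuclideanSpace ℝ (Fin n)) 1, inner ℝ (F z) (G z) := by
  rw [L2.inner_def, ← integral_subtype_comap measurableSet_closedBall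
    (fun z => (inner ℝ (F z) (G z) : ℝ))]
  refine integral_congr_ae ?_
  filter_upwards [ContinuousMap.coeFn_toLp (p := 2) (muB n) (𝕜 := ℝ) (cres F hF),
    ContinuousMap.coeFn_toLp (p := 2) (muB n) (𝕜 := ℝ) (cres G hG)] with z h1 h2
  simp only [jL]
  rw [h1, h2]; rfl

lemma jL_norm_sq (F : EuclideanSpace ℝ (Fin n) → E) (hF : Continuous F) :
    ‖jL (cres F hF)‖ ^ 2 = ∫ z in closedBall (0 : EuclideanSpace ℝ (Fin n)) 1, ‖F z‖ ^ 2 := by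
  rw [← real_inner_self_eq_norm_sq, jL_inner]
  simp only [real_inner_self_eq_norm_sq]

lemma jL_norm_le (F G : EuclideanSpace ℝ (Fin n) → E) (hF : Continuous F) (hG : Continuous G)
    (c : ℝ) (h : ∀ z ∈ closedBall (0 : EuclideanSpace ℝ (Fin n)) 1, ‖F z‖ ≤ c * ‖G z‖) :
    ‖jL (cres F hF)‖ ≤ c * ‖jL (cres G hG)‖ := by
  apply Lp.norm_le_mul_norm_of_ae_le_mul
  filter_upwards [ContinuousMap.coeFn_toLp (p := 2) (muB n) (𝕜 := ℝ) (cres F hF),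
    ContinuousMap.coeFn_toLp (p := 2) (muB n) (𝕜 := ℝ) (cres G hG)] with z h1 h2
  simp only [jL]
  rw [h1, h2]
  exact h z z.2

end L2

lemma curve_hasDerivAt {K : Type*} [TopologicalSpace K] [CompactSpace K]
    {E : Type*} [NormedAddCommGroup E] [NormedSpace ℝ E] [CompleteSpace E]
    (F F' : ℝ → C(K, E)) (hF' : Continuous F')
    (h : ∀ z s, HasDerivAt (fun s => F s z) (F' s z) s) (s₀ : ℝ) : HasDerivAt F (F' s₀) s₀ := by
  have key : F = fun s => F s₀ + ∫ t in s₀..s, F' t := by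
    funext s
    ext z
    have h1 : (∫ t in s₀..s, F' t) z = ∫ t in s₀..s, F' t z := by
      have := (ContinuousMap.evalCLM ℝ z : C(K, E) →L[ℝ] E).intervalIntegral_comp_comm
        (hF'.intervalIntegrable (μ := volume) s₀ s)
      exact this.symm
    have h2 : ∫ t in s₀..s, F' t z = F s z - F s₀ z := by
      refine intervalIntegral.integral_eq_sub_of_hasDerivAt (fun t _ => h z t) ?_
      apply Continuous.intervalIntegrable
      exact (continuous_eval_const z).comp hF'
    simp [h1, h2]
  rw [key]
  have := intervalIntegral.integral_hasDerivAt_right (hF'.intervalIntegrable (μ := volume) s₀ s₀)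
    (hF'.stronglyMeasurableAtFilter _ _) hF'.continuousAt
  simpa using this.const_add (F s₀)


lemma cres_curve_cont {n : ℕ} {E : Type*} [NormedAddCommGroup E] [InnerProductSpace ℝ E]
    (G : ℝ → EuclideanSpace ℝ (Fin n) → E)
    (hG : Continuous (fun p : ℝ × EuclideanSpace ℝ (Fin n) => G p.1 p.2))
    (h : ∀ s, Continuous (G s)) : Continuous (fun s => cres (G s) (h s)) := by
  apply ContinuousMap.continuous_of_continuous_uncurry
  exact hG.comp (continuous_fst.prodMk (continuous_subtype_val.comp continuous_snd))

lemma jL_curve_hasDerivAt {n : ℕ} {E : Type*} [NormedAddCommGroup E] [InnerProductSpace ℝ E]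
    [CompleteSpace E] (G G' : ℝ → EuclideanSpace ℝ (Fin n) → E)
    (hG' : Continuous (fun p : ℝ × EuclideanSpace ℝ (Fin n) => G' p.1 p.2))
    (h : ∀ s, Continuous (G s)) (h' : ∀ s, Continuous (G' s))
    (hd : ∀ z s, HasDerivAt (fun s => G s z) (G' s z) s) (s₀ : ℝ) :
    HasDerivAt (fun s => jL (cres (G s) (h s))) (jL (cres (G' s₀) (h' s₀))) s₀ :=
  (jL (n := n) (E := E)).hasFDerivAt.comp_hasDerivAt s₀
    (curve_hasDerivAt (fun s => cres (G s) (h s)) (fun s => cres (G' s) (h' s))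
      (cres_curve_cont G' hG' h') (fun z s => hd z s) s₀)

section rot
variable {n : ℕ}

/-- rotation in the `(j,k)` plane -/
def rotL (j k : Fin n) (θ : ℝ) : EuclideanSpace ℝ (Fin n) →ₗ[ℝ] EuclideanSpace ℝ (Fin n) where
  toFun z := z + (Real.cos θ - 1) • (z j • EuclideanSpace.single j (1:ℝ) + z k • EuclideanSpace.single k (1:ℝ))
    + Real.sin θ • (z j • EuclideanSpace.single k (1:ℝ) - z k • EuclideanSpace.single j (1:ℝ))
  map_add' x y := by simp; module
  map_smul' x y := by simp; module

lemma rotL_norm (j k : Fin n) (hjk : j ≠ k) (θ : ℝ) (z : EuclideanSpace ℝ (Fin n)) :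
    ‖rotL j k θ z‖ = ‖z‖ := by
  have : ‖rotL j k θ z‖ ^ 2 = ‖z‖ ^ 2 := by
    rw [← real_inner_self_eq_norm_sq, ← real_inner_self_eq_norm_sq]
    simp only [rotL, LinearMap.coe_mk, AddHom.coe_mk]
    simp only [inner_add_left, inner_add_right, inner_sub_left, inner_sub_right,
      real_inner_smul_left, real_inner_smul_right, EuclideanSpace.inner_single_left,
      EuclideanSpace.inner_single_right]
    simp [hjk, hjk.symm]
    have := Real.sin_sq_add_cos_sq θ
    linear_combination ((z j)^2 + (z k)^2) * this
  exact (sq_eq_sq₀ (norm_nonneg _) (norm_nonneg _)).1 this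

/-- derivative of the rotation in the angle -/
def rotD (j k : Fin n) (θ : ℝ) (z : EuclideanSpace ℝ (Fin n)) : EuclideanSpace ℝ (Fin n) :=
  (-Real.sin θ) • (z j • EuclideanSpace.single j (1:ℝ) + z k • EuclideanSpace.single k (1:ℝ))
    + Real.cos θ • (z j • EuclideanSpace.single k (1:ℝ) - z k • EuclideanSpace.single j (1:ℝ))

lemma rotL_cont (j k : Fin n) :
    Continuous (fun p : ℝ × EuclideanSpace ℝ (Fin n) => rotL j k p.1 p.2) := by
  simp only [rotL, LinearMap.coe_mk, AddHom.coe_mk]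
  fun_prop

lemma rotD_cont (j k : Fin n) :
    Continuous (fun p : ℝ × EuclideanSpace ℝ (Fin n) => rotD j k p.1 p.2) := by
  simp only [rotD]
  fun_prop

lemma rotL_cont1 (j k : Fin n) (θ : ℝ) : Continuous (fun z => rotL j k θ z) :=
  (rotL j k θ).continuous_of_finiteDimensional

lemma rotD_cont1 (j k : Fin n) (θ : ℝ) : Continuous (fun z => rotD j k θ z) := by
  simp only [rotD]
  fun_prop

lemma rotL_hasDerivAt (j k : Fin n) (θ : ℝ) (z : EuclideanSpace ℝ (Fin n)) :
    HasDerivAt (fun θ => rotL j k θ z) (rotD j k θ z) θ := by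
  simp only [rotL, LinearMap.coe_mk, AddHom.coe_mk, rotD]
  exact ((((Real.hasDerivAt_cos θ).sub_const 1).smul_const _).const_add _).add
    ((Real.hasDerivAt_sin θ).smul_const _)

lemma rotL_integral (j k : Fin n) (hjk : j ≠ k) (θ : ℝ) (φ : EuclideanSpace ℝ (Fin n) → ℝ) :
    ∫ z in closedBall (0 : EuclideanSpace ℝ (Fin n)) 1, φ (rotL j k θ z) =
      ∫ z in closedBall (0 : EuclideanSpace ℝ (Fin n)) 1, φ z := by
  obtain ⟨e, he⟩ : ∃ e : EuclideanSpace ℝ (Fin n) ≃ₗᵢ[ℝ] EuclideanSpace ℝ (Fin n),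
      ∀ z, e z = rotL j k θ z :=
    ⟨LinearIsometry.toLinearIsometryEquiv ⟨rotL j k θ, rotL_norm j k hjk θ⟩ rfl, fun z => rfl⟩
  have := (e.measurePreserving).setIntegral_preimage_emb
    e.toHomeomorph.measurableEmbedding φ (closedBall 0 1)
  rw [e.preimage_closedBall] at this
  simpa [he] using this

lemma rot_integral (j k : Fin n) (φ : EuclideanSpace ℝ (Fin n) → ℝ) (hφ : ContDiff ℝ 1 φ) :
    ∫ z in closedBall (0 : EuclideanSpace ℝ (Fin n)) 1,
      fderiv ℝ φ z (z j • EuclideanSpace.single k (1:ℝ) - z k • EuclideanSpace.single j (1:ℝ)) = 0 := by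
  by_cases hjk : j = k
  · subst hjk; simp
  have hfd : Continuous (fderiv ℝ φ) := hφ.continuous_fderiv (by norm_num)
  have hc' : Continuous (fun p : ℝ × EuclideanSpace ℝ (Fin n) =>
      fderiv ℝ φ (rotL j k p.1 p.2) (rotD j k p.1 p.2)) :=
    Continuous.clm_apply (Continuous.comp (g := fderiv ℝ φ) hfd (rotL_cont j k)) (rotD_cont j k)
  have hc : ∀ θ, Continuous (fun z => φ (rotL j k θ z)) := fun θ =>
    Continuous.comp (g := φ) hφ.continuous (rotL_cont1 j k θ)
  have hc'' : ∀ θ, Continuous (fun z => fderiv ℝ φ (rotL j k θ z) (rotD j k θ z)) := fun θ =>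
    Continuous.clm_apply (Continuous.comp (g := fderiv ℝ φ) hfd (rotL_cont1 j k θ)) (rotD_cont1 j k θ)
  have hd := jL_curve_hasDerivAt (fun θ z => φ (rotL j k θ z))
    (fun θ z => fderiv ℝ φ (rotL j k θ z) (rotD j k θ z)) hc' hc hc''
    (fun z θ => HasFDerivAt.comp_hasDerivAt (l := φ) θ
      ((hφ.differentiable (by norm_num)) _).hasFDerivAt (rotL_hasDerivAt j k θ z)) 0
  have hd2 := (innerSL ℝ (jL (cres (n := n) (fun _ => (1:ℝ)) continuous_const))).hasFDerivAt.comp_hasDerivAt 0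
      hd
  have hd3 : HasDerivAt (fun _ : ℝ => ∫ z in closedBall (0 : EuclideanSpace ℝ (Fin n)) 1, φ z) 0 0 :=
    hasDerivAt_const _ _
  have h0 := hd2.unique (hd3.congr_of_eventuallyEq (Eventually.of_forall fun θ => ?_))
  · rw [innerSL_apply_apply, jL_inner] at h0
    simpa [rotL, rotD] using h0
  · simp only [Function.comp, innerSL_apply_apply, jL_inner]
    rw [← rotL_integral j k hjk θ φ]
    simp

end rot

section cliff
variable {n : ℕ} {E : Type*} [NormedAddCommGroup E] [InnerProductSpace ℝ E]

/-- skew Clifford system of bounded operators -/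
structure Cliff (c : Fin n → E →L[ℝ] E) : Prop where
  sk : ∀ j v w, inner ℝ (c j v) w = - inner ℝ v (c j w)
  rel : ∀ j k w, c j (c k w) + c k (c j w) = if j = k then (-2:ℝ) • w else 0

/-- Clifford multiplication -/
def cm (c : Fin n → E →L[ℝ] E) (z : EuclideanSpace ℝ (Fin n)) : E →L[ℝ] E := ∑ j, z j • c j

/-- Dirac operator applied to a derivative -/
def dirA (c : Fin n → E →L[ℝ] E) (A : EuclideanSpace ℝ (Fin n) →L[ℝ] E) : E :=
  ∑ j, c j (A (EuclideanSpace.single j (1:ℝ)))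

lemma cm_apply (c : Fin n → E →L[ℝ] E) (z : EuclideanSpace ℝ (Fin n)) (w : E) :
    cm c z w = ∑ j, z j • c j w := by
  simp [cm]

lemma dirA_eq_basis {c : Fin n → E →L[ℝ] E}
    (b : OrthonormalBasis (Fin n) ℝ (EuclideanSpace ℝ (Fin n)))
    (A : EuclideanSpace ℝ (Fin n) →L[ℝ] E) :
    dirA c A = ∑ i, cm c (b i) (A (b i)) := by
  have h1 : ∀ j, A (EuclideanSpace.single j (1:ℝ)) = ∑ i, (b i j) • A (b i) := by
    intro j
    conv_lhs => rw [← b.sum_repr' (EuclideanSpace.single j (1:ℝ))]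
    rw [map_sum]
    refine Finset.sum_congr rfl fun i _ => ?_
    rw [map_smul, EuclideanSpace.inner_single_right]
    simp
  simp only [dirA, h1, cm_apply, map_sum, map_smul]
  rw [Finset.sum_comm]

lemma Cliff.cm_sq {c : Fin n → E →L[ℝ] E} (h : Cliff c) (z : EuclideanSpace ℝ (Fin n)) (w : E) :
    cm c z (cm c z w) = - (‖z‖ ^ 2 • w) := by
  have e1 : cm c z (cm c z w) = ∑ j, ∑ k, (z j * z k) • c j (c k w) := by
    simp only [cm_apply, map_sum, map_smul, Finset.smul_sum, smul_smul]
    first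
      | done
      | (rw [Finset.sum_comm]
         refine Finset.sum_congr rfl fun j _ => Finset.sum_congr rfl fun k _ => ?_
         rw [mul_comm])
  have e2 : cm c z (cm c z w) = ∑ j, ∑ k, (z j * z k) • c k (c j w) := by
    rw [e1, Finset.sum_comm]
    refine Finset.sum_congr rfl fun j _ => Finset.sum_congr rfl fun k _ => ?_
    rw [mul_comm]
  have e3 : (2:ℝ) • cm c z (cm c z w) = (2:ℝ) • (- (‖z‖ ^ 2 • w)) := by
    rw [two_smul]
    nth_rw 1 [e1]
    rw [e2, ← Finset.sum_add_distrib]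
    simp only [← Finset.sum_add_distrib, ← smul_add, h.rel]
    simp only [smul_ite, smul_zero, Finset.sum_ite_eq, Finset.mem_univ, if_true]
    rw [EuclideanSpace.real_norm_sq_eq, Finset.sum_smul, ← Finset.sum_neg_distrib, Finset.smul_sum]
    refine Finset.sum_congr rfl fun j _ => ?_
    module
  exact smul_right_injective _ (two_ne_zero) e3

lemma Cliff.cm_skew {c : Fin n → E →L[ℝ] E} (h : Cliff c) (z : EuclideanSpace ℝ (Fin n)) (v w : E) :
    inner ℝ (cm c z v) w = - inner ℝ v (cm c z w) := by
  simp only [cm_apply, sum_inner, inner_sum, real_inner_smul_left, real_inner_smul_right, h.sk,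
    ← Finset.sum_neg_distrib, mul_neg]

lemma Cliff.cm_norm {c : Fin n → E →L[ℝ] E} (h : Cliff c) (z : EuclideanSpace ℝ (Fin n)) (w : E) :
    ‖cm c z w‖ = ‖z‖ * ‖w‖ := by
  have : ‖cm c z w‖ ^ 2 = (‖z‖ * ‖w‖) ^ 2 := by
    rw [← real_inner_self_eq_norm_sq, h.cm_skew, h.cm_sq, inner_neg_right, real_inner_smul_right,
      real_inner_self_eq_norm_sq]
    ring
  exact (sq_eq_sq₀ (norm_nonneg _) (by positivity)).1 this

/-- the spherical operator applied to a derivative -/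
def bop (c : Fin n → E →L[ℝ] E) (A : EuclideanSpace ℝ (Fin n) →L[ℝ] E)
    (z : EuclideanSpace ℝ (Fin n)) : E := A z + cm c z (dirA c A)

lemma sum_coord (A : EuclideanSpace ℝ (Fin n) →L[ℝ] E) (z : EuclideanSpace ℝ (Fin n)) :
    A z = ∑ j, z j • A (EuclideanSpace.single j (1:ℝ)) := by
  have := (EuclideanSpace.basisFun (Fin n) ℝ).sum_repr' z
  conv_lhs => rw [← this]
  rw [map_sum]
  refine Finset.sum_congr rfl fun i _ => ?_
  rw [map_smul]
  simp [EuclideanSpace.basisFun_apply, EuclideanSpace.inner_single_left]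

lemma Cliff.bop_eq {c : Fin n → E →L[ℝ] E} (h : Cliff c) (A : EuclideanSpace ℝ (Fin n) →L[ℝ] E)
    (z : EuclideanSpace ℝ (Fin n)) :
    bop c A z = ∑ j, ∑ k, (1/2 : ℝ) • c j (c k
      (A (z j • EuclideanSpace.single k (1:ℝ) - z k • EuclideanSpace.single j (1:ℝ)))) := by
  have e1 : cm c z (dirA c A) = ∑ j, ∑ k, z j • c j (c k (A (EuclideanSpace.single k (1:ℝ)))) := by
    simp only [cm_apply, dirA, map_sum]
    rw [Finset.sum_comm]
  have e2 : ∑ j, ∑ k, z k • c j (c k (A (EuclideanSpace.single j (1:ℝ))))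
      = - cm c z (dirA c A) - (2:ℝ) • A z := by
    rw [Finset.sum_comm, e1, sum_coord A z, Finset.smul_sum, ← Finset.sum_neg_distrib,
      ← Finset.sum_sub_distrib]
    refine Finset.sum_congr rfl fun j _ => ?_
    have : ∀ k, c k (c j (A (EuclideanSpace.single k (1:ℝ)))) =
      (if j = k then (-2:ℝ) • A (EuclideanSpace.single k (1:ℝ)) else 0)
        - c j (c k (A (EuclideanSpace.single k (1:ℝ)))) := by
      intro k
      rw [← h.rel j k]; abel
    simp only [this, smul_sub, smul_ite, smul_zero, Finset.sum_sub_distrib, Finset.sum_ite_eq,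
      Finset.mem_univ, if_true]
    module
  simp only [map_sub, map_smul, smul_sub, Finset.sum_sub_distrib]
  have e1' : ∑ j, ∑ k, (1/2:ℝ) • z j • c j (c k (A (EuclideanSpace.single k (1:ℝ))))
      = (1/2:ℝ) • cm c z (dirA c A) := by
    rw [e1]; simp only [Finset.smul_sum]
  have e2' : ∑ j, ∑ k, (1/2:ℝ) • z k • c j (c k (A (EuclideanSpace.single j (1:ℝ))))
      = (1/2:ℝ) • (- cm c z (dirA c A) - (2:ℝ) • A z) := by
    rw [← e2]; simp only [Finset.smul_sum]
  rw [e1', e2', bop]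
  module

lemma Cliff.bop_symm {c : Fin n → E →L[ℝ] E} (h : Cliff c) (f g : EuclideanSpace ℝ (Fin n) → E)
    (hf : ContDiff ℝ 1 f) (hg : ContDiff ℝ 1 g) :
    ∫ z in closedBall (0 : EuclideanSpace ℝ (Fin n)) 1, inner ℝ (bop c (fderiv ℝ f z) z) (g z) =
    ∫ z in closedBall (0 : EuclideanSpace ℝ (Fin n)) 1, inner ℝ (f z) (bop c (fderiv ℝ g z) z) := by
  have cf : Continuous (fderiv ℝ f) := hf.continuous_fderiv one_ne_zero
  have cg : Continuous (fderiv ℝ g) := hg.continuous_fderiv one_ne_zero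
  have cf0 := hf.continuous
  have cg0 := hg.continuous
  have hφ : ∀ j k, ContDiff ℝ 1 (fun z => inner ℝ (f z) (c j (c k (g z)))) := fun j k =>
    hf.inner ℝ ((c j).contDiff.comp ((c k).contDiff.comp hg))
  have hpt : ∀ z : EuclideanSpace ℝ (Fin n), inner ℝ (bop c (fderiv ℝ f z) z) (g z)
      - inner ℝ (f z) (bop c (fderiv ℝ g z) z)
      = ∑ j, ∑ k, (-(1/2:ℝ)) * fderiv ℝ (fun z => inner ℝ (f z) (c j (c k (g z)))) z
        (z j • EuclideanSpace.single k (1:ℝ) - z k • EuclideanSpace.single j (1:ℝ)) := by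
    intro z
    rw [h.bop_eq, h.bop_eq]
    simp only [sum_inner, inner_sum, ← Finset.sum_sub_distrib]
    refine Finset.sum_congr rfl fun j _ => Finset.sum_congr rfl fun k _ => ?_
    have hd : HasFDerivAt (fun z => c j (c k (g z))) ((c j).comp ((c k).comp (fderiv ℝ g z))) z :=
      (c j).hasFDerivAt.comp z ((c k).hasFDerivAt.comp z
        (hg.differentiable one_ne_zero z).hasFDerivAt)
    rw [fderiv_inner_apply ℝ (hf.differentiable one_ne_zero z) hd.differentiableAt, hd.fderiv]
    simp only [ContinuousLinearMap.comp_apply, real_inner_smul_left, real_inner_smul_right]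
    set v := z j • EuclideanSpace.single k (1:ℝ) - z k • EuclideanSpace.single j (1:ℝ) with hv
    by_cases hjk : j = k
    · subst hjk
      simp at hv
      simp [hv]
    · have : c k (c j (g z)) = - c j (c k (g z)) := by
        have := h.rel j k (g z)
        rw [if_neg hjk] at this
        exact (neg_eq_of_add_eq_zero_right this).symm
      rw [h.sk, h.sk, neg_neg, this, inner_neg_right]
      ring
  have hintg : ∀ F : EuclideanSpace ℝ (Fin n) → ℝ, Continuous F →
      IntegrableOn F (closedBall (0 : EuclideanSpace ℝ (Fin n)) 1) := fun F hF =>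
    hF.continuousOn.integrableOn_compact (isCompact_closedBall _ _)
  have c1 : Continuous fun z => bop c (fderiv ℝ f z) z := by
    simp only [bop, cm_apply, dirA]; fun_prop
  have c2 : Continuous fun z => bop c (fderiv ℝ g z) z := by
    simp only [bop, cm_apply, dirA]; fun_prop
  rw [← sub_eq_zero, ← integral_sub (hintg _ (by fun_prop)) (hintg _ (by fun_prop))]
  simp only [hpt]
  have cφ : ∀ j k, Continuous (fun z : EuclideanSpace ℝ (Fin n) => (-(1/2:ℝ)) * fderiv ℝ (fun z => inner ℝ (f z) (c j (c k (g z)))) z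
        (z j • EuclideanSpace.single k (1:ℝ) - z k • EuclideanSpace.single j (1:ℝ))) := by
    intro j k
    have := (hφ j k).continuous_fderiv one_ne_zero
    fun_prop
  rw [integral_finsetSum _ fun j _ => hintg _ (continuous_finsetSum _ fun k _ => cφ j k)]
  refine Finset.sum_eq_zero fun j _ => ?_
  rw [integral_finsetSum _ fun k _ => hintg _ (cφ j k)]
  refine Finset.sum_eq_zero fun k _ => ?_
  rw [integral_const_mul, rot_integral j k _ (hφ j k), mul_zero]

end cliff

section sol
variable {n : ℕ} {E : Type*} [NormedAddCommGroup E] [InnerProductSpace ℝ E]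

lemma jL_congr (F G : EuclideanSpace ℝ (Fin n) → E) (hF : Continuous F) (hG : Continuous G)
    (h : ∀ z, F z = G z) : jL (cres F hF) = jL (cres G hG) := by
  have : F = G := funext h
  subst this; rfl

lemma jL_add (F G : EuclideanSpace ℝ (Fin n) → E) (hF : Continuous F) (hG : Continuous G) :
    jL (cres F hF) + jL (cres G hG) = jL (cres (fun z => F z + G z) (hF.add hG)) := by
  rw [← map_add]; rfl

lemma jL_sub (F G : EuclideanSpace ℝ (Fin n) → E) (hF : Continuous F) (hG : Continuous G) :
    jL (cres F hF) - jL (cres G hG) = jL (cres (fun z => F z - G z) (hF.sub hG)) := by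
  rw [← map_sub]; rfl

lemma jL_smul (F : EuclideanSpace ℝ (Fin n) → E) (hF : Continuous F) (t : ℝ) :
    t • jL (cres F hF) = jL (cres (fun z => t • F z) (hF.const_smul t)) := by
  rw [← map_smul]; rfl

/-- solutions of the differential inequality -/
structure Sol (c : Fin n → E →L[ℝ] E) (ψ : EuclideanSpace ℝ (Fin n) → E) (C ρ : ℝ) : Prop where
  cl : Cliff c
  cd : ContDiff ℝ 1 ψ
  hC : 0 ≤ C
  hb : ∀ x ∈ ball (0 : EuclideanSpace ℝ (Fin n)) ρ, ‖dirA c (fderiv ℝ ψ x)‖ ≤ C * ‖ψ x‖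

namespace Sol
variable {c : Fin n → E →L[ℝ] E} {ψ : EuclideanSpace ℝ (Fin n) → E} {C ρ : ℝ}

lemma cfd (h : Sol c ψ C ρ) : Continuous (fderiv ℝ ψ) := h.cd.continuous_fderiv one_ne_zero

lemma cu (h : Sol c ψ C ρ) (p : EuclideanSpace ℝ (Fin n)) (r : ℝ) :
    Continuous (fun z => ψ (p + r • z)) := by
  have := h.cd.continuous; fun_prop

lemma ca (h : Sol c ψ C ρ) (p : EuclideanSpace ℝ (Fin n)) (r : ℝ) :
    Continuous (fun z => bop c (r • fderiv ℝ ψ (p + r • z)) z) := by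
  have := h.cfd; simp only [bop, cm_apply, dirA]; fun_prop

lemma cf (h : Sol c ψ C ρ) (p : EuclideanSpace ℝ (Fin n)) (r : ℝ) :
    Continuous (fun z => -(r • cm c z (dirA c (fderiv ℝ ψ (p + r • z))))) := by
  have := h.cfd; simp only [bop, cm_apply, dirA]; fun_prop

lemma ce (h : Sol c ψ C ρ) (p : EuclideanSpace ℝ (Fin n)) (r : ℝ) :
    Continuous (fun z => r • fderiv ℝ ψ (p + r • z) z) := by
  have := h.cfd; fun_prop

/-- rescaled function -/
def u (h : Sol c ψ C ρ) (p : EuclideanSpace ℝ (Fin n)) (r : ℝ) : Lp E 2 (muB n) :=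
  jL (cres (fun z => ψ (p + r • z)) (h.cu p r))
/-- spherical part -/
def a (h : Sol c ψ C ρ) (p : EuclideanSpace ℝ (Fin n)) (r : ℝ) : Lp E 2 (muB n) :=
  jL (cres (fun z => bop c (r • fderiv ℝ ψ (p + r • z)) z) (h.ca p r))
/-- error part -/
def f (h : Sol c ψ C ρ) (p : EuclideanSpace ℝ (Fin n)) (r : ℝ) : Lp E 2 (muB n) :=
  jL (cres (fun z => -(r • cm c z (dirA c (fderiv ℝ ψ (p + r • z))))) (h.cf p r))

lemma a_add_f (h : Sol c ψ C ρ) (p : EuclideanSpace ℝ (Fin n)) (r : ℝ) :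
    h.a p r + h.f p r = jL (cres (fun z => r • fderiv ℝ ψ (p + r • z) z) (h.ce p r)) := by
  rw [a, f, jL_add]
  refine jL_congr _ _ _ _ fun z => ?_
  have : dirA c (r • fderiv ℝ ψ (p + r • z)) = r • dirA c (fderiv ℝ ψ (p + r • z)) := by
    simp [dirA, Finset.smul_sum]
  rw [bop, this, map_smul]
  simp

lemma mem_ball_of (p z : EuclideanSpace ℝ (Fin n)) {r : ℝ} (hr : 0 < r) (hr1 : r < ρ - ‖p‖)
    (hz : z ∈ closedBall (0 : EuclideanSpace ℝ (Fin n)) 1) : p + r • z ∈ ball 0 ρ := by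
  rw [mem_closedBall_zero_iff] at hz
  rw [mem_ball_zero_iff]
  calc ‖p + r • z‖ ≤ ‖p‖ + ‖r • z‖ := norm_add_le _ _
    _ = ‖p‖ + r * ‖z‖ := by rw [norm_smul, Real.norm_eq_abs, abs_of_pos hr]
    _ ≤ ‖p‖ + r * 1 := by gcongr
    _ < ρ := by linarith

lemma scaled_fderiv (h : Sol c ψ C ρ) (p : EuclideanSpace ℝ (Fin n)) (r : ℝ)
    (z : EuclideanSpace ℝ (Fin n)) :
    HasFDerivAt (fun z => ψ (p + r • z)) (r • fderiv ℝ ψ (p + r • z)) z := by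
  have h1 : HasFDerivAt (fun z : EuclideanSpace ℝ (Fin n) => p + r • z)
      (r • ContinuousLinearMap.id ℝ (EuclideanSpace ℝ (Fin n))) z :=
    ((hasFDerivAt_id z).const_smul r).const_add p
  have h2 := (h.cd.differentiable one_ne_zero (p + r • z)).hasFDerivAt.comp z h1
  have e : r • fderiv ℝ ψ (p + r • z) = (fderiv ℝ ψ (p + r • z)).comp
      (r • ContinuousLinearMap.id ℝ (EuclideanSpace ℝ (Fin n))) := by
    ext v; simp
  rw [e]
  exact h2

theorem freq [CompleteSpace E] (h : Sol c ψ C ρ) (p : EuclideanSpace ℝ (Fin n)) :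
    FreqData (h.u p) (h.a p) (h.f p) C (ρ - ‖p‖) where
  hC := h.hC
  der := by
    intro r hr
    have hc' := h.cfd
    have hG' : Continuous (fun q : ℝ × EuclideanSpace ℝ (Fin n) =>
      fderiv ℝ ψ (p + q.1 • q.2) q.2) := by fun_prop
    have hd : ∀ (z : EuclideanSpace ℝ (Fin n)) (s : ℝ),
        HasDerivAt (fun s : ℝ => ψ (p + s • z)) (fderiv ℝ ψ (p + s • z) z) s := by
      intro z s
      have h1 : HasDerivAt (fun s : ℝ => p + s • z) z s := by
        simpa using ((hasDerivAt_id s).smul_const z).const_add p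
      exact (h.cd.differentiable one_ne_zero (p + s • z)).hasFDerivAt.comp_hasDerivAt
        (l := ψ) s h1
    have := jL_curve_hasDerivAt (fun s z => ψ (p + s • z)) (fun s z => fderiv ℝ ψ (p + s • z) z)
      hG' (h.cu p) (fun s => by fun_prop) hd r
    rw [h.a_add_f, jL_smul]
    have e : jL (cres (fun z => r⁻¹ • r • fderiv ℝ ψ (p + r • z) z)
        ((h.ce p r).const_smul r⁻¹)) = jL (cres (fun z => fderiv ℝ ψ (p + r • z) z)
        (by fun_prop)) := by
      refine jL_congr _ _ _ _ fun z => ?_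
      rw [smul_smul, inv_mul_cancel₀ hr.1.ne', one_smul]
    rw [e]
    exact this
  cont := by
    have hc' := h.cfd
    have hG : Continuous (fun q : ℝ × EuclideanSpace ℝ (Fin n) =>
      bop c (q.1 • fderiv ℝ ψ (p + q.1 • q.2)) q.2) := by
      simp only [bop, cm_apply, dirA]; fun_prop
    exact (jL (n := n) (E := E)).continuous.comp
      (cres_curve_cont (fun r z => bop c (r • fderiv ℝ ψ (p + r • z)) z) hG (h.ca p))
  symm := by
    intro r s
    rw [a, u, u, a, jL_inner, jL_inner]
    have := h.cl.bop_symm (fun z => ψ (p + s • z)) (fun z => ψ (p + r • z))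
      (h.cd.comp (by fun_prop)) (h.cd.comp (by fun_prop))
    simp only [(h.scaled_fderiv p _ _).fderiv] at this
    exact this
  bd := by
    intro r hr
    refine jL_norm_le _ _ _ _ _ fun z hz => ?_
    rw [norm_neg, norm_smul, Real.norm_eq_abs, abs_of_pos hr.1, h.cl.cm_norm]
    have h1 := h.hb _ (mem_ball_of p z hr.1 hr.2 hz)
    rw [mem_closedBall_zero_iff] at hz
    have hC := h.hC
    have hr0 := hr.1
    calc r * (‖z‖ * ‖dirA c (fderiv ℝ ψ (p + r • z))‖)
        ≤ r * (1 * (C * ‖ψ (p + r • z)‖)) := by gcongr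
      _ = _ := by ring

end Sol
end sol

namespace Sol
variable {n : ℕ} {E : Type*} [NormedAddCommGroup E] [InnerProductSpace ℝ E]
variable {c : Fin n → E →L[ℝ] E} {ψ : EuclideanSpace ℝ (Fin n) → E} {C ρ : ℝ}

lemma u_eq_zero (h : Sol c ψ C ρ) (p : EuclideanSpace ℝ (Fin n)) {r : ℝ}
    (hψ : ∀ x ∈ closedBall p r, ψ x = 0) (hr : 0 < r) : h.u p r = 0 := by
  have : ‖h.u p r‖ ^ 2 = 0 := by
    rw [u, jL_norm_sq]
    rw [setIntegral_congr_fun measurableSet_closedBall (g := fun _ => (0:ℝ))]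
    · simp
    · intro z hz
      have : ψ (p + r • z) = 0 := by
        apply hψ
        rw [mem_closedBall_zero_iff] at hz
        rw [mem_closedBall, dist_eq_norm, add_sub_cancel_left, norm_smul, Real.norm_eq_abs,
          abs_of_pos hr]
        nlinarith
      simp [this]
  simpa using this

lemma zero_of_u_eq_zero (h : Sol c ψ C ρ) (p : EuclideanSpace ℝ (Fin n)) {r : ℝ} (hr : 0 < r)
    (hu : h.u p r = 0) : ∀ x ∈ ball p r, ψ x = 0 := by
  have h1 : ∫ z in closedBall (0 : EuclideanSpace ℝ (Fin n)) 1, ‖ψ (p + r • z)‖ ^ 2 = 0 := by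
    rw [← jL_norm_sq _ (h.cu p r)]
    have : jL (cres (fun z => ψ (p + r • z)) (h.cu p r)) = 0 := hu
    rw [this]; simp
  have hc := h.cu p r
  have hc2 : Continuous fun z => ‖ψ (p + r • z)‖ ^ 2 := hc.norm.pow 2
  rw [setIntegral_eq_zero_iff_of_nonneg_ae (Eventually.of_forall fun z => by positivity)
    (hc2.continuousOn.integrableOn_compact (isCompact_closedBall _ _))] at h1
  have h2 : (fun z => ‖ψ (p + r • z)‖ ^ 2) =ᵐ[volume.restrict
      (ball (0 : EuclideanSpace ℝ (Fin n)) 1)] fun _ => (0:ℝ) :=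
    ae_mono (Measure.restrict_mono ball_subset_closedBall le_rfl) h1
  have h3 := Measure.eqOn_open_of_ae_eq h2 isOpen_ball hc2.continuousOn continuousOn_const
  intro x hx
  have hz : r⁻¹ • (x - p) ∈ ball (0 : EuclideanSpace ℝ (Fin n)) 1 := by
    rw [mem_ball_zero_iff, norm_smul, norm_inv, Real.norm_eq_abs, abs_of_pos hr,
      inv_mul_lt_iff₀ hr, mul_one, ← dist_eq_norm]
    exact hx
  have h4 := h3 hz
  simp only at h4
  rw [smul_smul, mul_inv_cancel₀ hr.ne', one_smul, add_sub_cancel] at h4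
  simpa using h4

lemma vanish_big [CompleteSpace E] (h : Sol c ψ C ρ) (p : EuclideanSpace ℝ (Fin n)) {r : ℝ}
    (hr : 0 < r) (hu : ∀ x ∈ closedBall p r, ψ x = 0) : ∀ x ∈ ball p (ρ - ‖p‖), ψ x = 0 := by
  intro x hx
  rw [mem_ball] at hx
  obtain ⟨s, hs1, hs2⟩ := exists_between hx
  have hs0 : 0 < s := lt_of_le_of_lt dist_nonneg hs1
  by_cases hus : h.u p s = 0
  · exact h.zero_of_u_eq_zero p hs0 hus x hs1
  · exfalso
    have := (h.freq p).nonvanish hs0 hs2 hus (min r s) ⟨lt_min hr hs0, min_le_right _ _⟩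
    exact this (h.u_eq_zero p (fun y hy => hu y (closedBall_subset_closedBall (min_le_left _ _) hy))
      (lt_min hr hs0))

lemma unique_cont [CompleteSpace E] (h : Sol c ψ C ρ)
    (hne : ∃ x ∈ ball (0 : EuclideanSpace ℝ (Fin n)) ρ, ψ x ≠ 0)
    (p : EuclideanSpace ℝ (Fin n)) (r : ℝ) (hr : r ∈ Set.Ioo 0 (ρ - ‖p‖)) : h.u p r ≠ 0 := by
  intro hu
  let V : Set (EuclideanSpace ℝ (Fin n)) := {x | x ∈ ball 0 ρ ∧ ∀ᶠ y in nhds x, ψ y = 0}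
  have hVo : IsOpen V := by
    have h1 : IsOpen {x | ∀ᶠ y in nhds x, ψ y = 0} := isOpen_setOfPred_eventually_nhds
    exact isOpen_ball.inter h1
  have hp : p ∈ ball (0 : EuclideanSpace ℝ (Fin n)) ρ := by
    rw [mem_ball_zero_iff]; linarith [hr.1, hr.2]
  have hpV : p ∈ V := by
    refine ⟨hp, ?_⟩
    filter_upwards [ball_mem_nhds p hr.1] with y hy
    exact h.zero_of_u_eq_zero p hr.1 hu y hy
  have hcl : closure V ∩ ball 0 ρ ⊆ V := by
    rintro q ⟨hq, hq2⟩
    refine ⟨hq2, ?_⟩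
    rw [mem_ball_zero_iff] at hq2
    rw [Metric.mem_closure_iff] at hq
    obtain ⟨y, hy, hqy⟩ := hq ((ρ - ‖q‖) / 3) (by linarith)
    obtain ⟨e, he, hb⟩ := Metric.eventually_nhds_iff_ball.1 hy.2
    have h1 := h.vanish_big y (half_pos he) (fun x hx => hb x (closedBall_subset_ball (by linarith) hx))
    have h2 : q ∈ ball y (ρ - ‖y‖) := by
      rw [mem_ball]
      have : ‖y‖ ≤ ‖q‖ + dist q y := by
        rw [dist_comm, dist_eq_norm]
        calc ‖y‖ = ‖q + (y - q)‖ := by rw [add_sub_cancel]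
          _ ≤ _ := norm_add_le _ _
      linarith
    filter_upwards [isOpen_ball.mem_nhds h2] with x hx
    exact h1 x hx
  have hsub := (convex_ball (0 : EuclideanSpace ℝ (Fin n)) ρ).isPreconnected.subset_of_closure_inter_subset
    hVo ⟨p, hp, hpV⟩ hcl
  obtain ⟨x, hx, hx0⟩ := hne
  exact hx0 (hsub hx).2.self_of_nhds

/-- frequency -/
def N (h : Sol c ψ C ρ) (p : EuclideanSpace ℝ (Fin n)) (r : ℝ) : ℝ := freqN (h.u p) (h.a p) r

lemma N_lower [CompleteSpace E] (h : Sol c ψ C ρ)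
    (hne : ∃ x ∈ ball (0 : EuclideanSpace ℝ (Fin n)) ρ, ψ x ≠ 0)
    (p : EuclideanSpace ℝ (Fin n)) (hp : ψ p = 0) (r : ℝ) (hr : r ∈ Set.Ioo 0 (ρ - ‖p‖)) :
    1 ≤ h.N p r + C ^ 2 * r ^ 2 / 2 := by
  obtain ⟨L, hL⟩ := (isCompact_closedBall p (ρ - ‖p‖)).exists_bound_of_continuousOn
    h.cfd.continuousOn
  have hL0 : 0 ≤ L := (norm_nonneg _).trans (hL p (mem_closedBall_self (by linarith [hr.1, hr.2])))
  refine (h.freq p).lower (L := ‖(jL : C(KB n, E) →L[ℝ] Lp E 2 (muB n))‖ * L) (h.unique_cont hne p)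
    ?_ hr
  intro s hs
  have h1 : ‖cres (fun z => ψ (p + s • z)) (h.cu p s)‖ ≤ L * s := by
    rw [ContinuousMap.norm_le _ (by have := hs.1; positivity)]
    rintro ⟨z, hz⟩
    rw [mem_closedBall_zero_iff] at hz
    have hsz : ‖s • z‖ ≤ s := by
      rw [norm_smul, Real.norm_eq_abs, abs_of_pos hs.1]
      nlinarith [hs.1]
    have hmem : p + s • z ∈ closedBall p (ρ - ‖p‖) := by
      rw [mem_closedBall, dist_eq_norm, add_sub_cancel_left]
      linarith [hs.2]
    have := (convex_closedBall p (ρ - ‖p‖)).norm_image_sub_le_of_norm_fderiv_le (𝕜 := ℝ) (f := ψ)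
      (fun x _ => h.cd.differentiable one_ne_zero x) hL
      (mem_closedBall_self (by linarith [hr.1, hr.2])) hmem
    rw [hp, sub_zero, add_sub_cancel_left] at this
    exact this.trans (by gcongr)
  calc ‖h.u p s‖ ≤ ‖(jL : C(KB n, E) →L[ℝ] Lp E 2 (muB n))‖ * ‖cres (fun z => ψ (p + s • z)) (h.cu p s)‖ :=
        ContinuousLinearMap.le_opNorm _ _
    _ ≤ ‖(jL : C(KB n, E) →L[ℝ] Lp E 2 (muB n))‖ * (L * s) := by gcongr
    _ = _ := by ring

end Sol

lemma ball_scale {n : ℕ} (g : EuclideanSpace ℝ (Fin n) → ℝ) (p : EuclideanSpace ℝ (Fin n)) {r : ℝ}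
    (hr : 0 < r) :
    ∫ x in closedBall p r, g x
      = r ^ n * ∫ z in closedBall (0 : EuclideanSpace ℝ (Fin n)) 1, g (p + r • z) := by
  have h1 := Measure.setIntegral_comp_smul_of_pos (volume : Measure (EuclideanSpace ℝ (Fin n)))
    (fun x => g (p + x)) (closedBall 0 1) hr
  rw [smul_unitClosedBall_of_nonneg hr.le] at h1
  have h2 : ∫ x in closedBall p r, g x = ∫ x in closedBall (0 : EuclideanSpace ℝ (Fin n)) r, g (p + x) := by
    have := (measurePreserving_add_left (volume : Measure (EuclideanSpace ℝ (Fin n))) p).setIntegral_preimage_emb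
      (MeasurableEquiv.addLeft p).measurableEmbedding g (closedBall p r)
    rw [← this, preimage_add_closedBall, sub_self]
  rw [h2, h1, smul_eq_mul, finrank_euclideanSpace_fin, ← mul_assoc, mul_inv_cancel₀ (by positivity),
    one_mul]

lemma diag_basis {n : ℕ} {H : Type*} [NormedAddCommGroup H] [InnerProductSpace ℝ H] [CompleteSpace H]
    (Λ : EuclideanSpace ℝ (Fin n) →L[ℝ] H) :
    ∃ b : OrthonormalBasis (Fin n) ℝ (EuclideanSpace ℝ (Fin n)),
      ∀ v i, |inner ℝ (b i) v| * ‖Λ (b i)‖ ≤ ‖Λ v‖ := by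
  let T := (ContinuousLinearMap.adjoint Λ).comp Λ
  have hT : (T : EuclideanSpace ℝ (Fin n) →ₗ[ℝ] EuclideanSpace ℝ (Fin n)).IsSymmetric := by
    intro x y
    simp only [T, ContinuousLinearMap.coe_coe, ContinuousLinearMap.comp_apply]
    rw [ContinuousLinearMap.adjoint_inner_left, ContinuousLinearMap.adjoint_inner_right]
  let b := hT.eigenvectorBasis finrank_euclideanSpace_fin
  have horth : ∀ i j, i ≠ j → inner ℝ (Λ (b i)) (Λ (b j)) = 0 := by
    intro i j hij
    have h1 : inner ℝ (T (b i)) (b j) = inner ℝ (Λ (b i)) (Λ (b j)) := by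
      simp only [T, ContinuousLinearMap.comp_apply, ContinuousLinearMap.adjoint_inner_left]
    have h2 : T (b i) = (hT.eigenvalues finrank_euclideanSpace_fin i) • b i :=
      hT.apply_eigenvectorBasis finrank_euclideanSpace_fin i
    rw [← h1, h2, real_inner_smul_left, b.inner_eq_zero hij, mul_zero]
  refine ⟨b, fun v i => ?_⟩
  have hv : Λ v = ∑ j, inner ℝ (b j) v • Λ (b j) := by
    conv_lhs => rw [← b.sum_repr' v]
    simp only [map_sum, map_smul]
  have hin : inner ℝ (Λ (b i)) (Λ v) = inner ℝ (b i) v * ‖Λ (b i)‖ ^ 2 := by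
    rw [hv, inner_sum, Finset.sum_eq_single i]
    · rw [real_inner_smul_right, real_inner_self_eq_norm_sq]
    · intro j _ hj
      rw [real_inner_smul_right, horth i j hj.symm, mul_zero]
    · simp
  have hcs := abs_real_inner_le_norm (Λ (b i)) (Λ v)
  rw [hin, abs_mul, abs_of_nonneg (by positivity : 0 ≤ ‖Λ (b i)‖ ^ 2)] at hcs
  rcases eq_or_ne ‖Λ (b i)‖ 0 with h0 | h0
  · rw [h0, mul_zero]; positivity
  · have hpos : 0 < ‖Λ (b i)‖ := by positivity
    refine le_of_mul_le_mul_left ?_ hpos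
    calc _ = |inner ℝ (b i) v| * ‖Λ (b i)‖ ^ 2 := by ring
      _ ≤ _ := hcs

namespace Sol
variable {n : ℕ} {E : Type*} [NormedAddCommGroup E] [InnerProductSpace ℝ E]
variable {c : Fin n → E →L[ℝ] E} {ψ : EuclideanSpace ℝ (Fin n) → E} {C ρ : ℝ}

lemma cl' (h : Sol c ψ C ρ) (p : EuclideanSpace ℝ (Fin n)) (r : ℝ) (v : EuclideanSpace ℝ (Fin n)) :
    Continuous (fun z => r • fderiv ℝ ψ (p + r • z) v) := by
  have := h.cfd; fun_prop

/-- the derivative in all directions -/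
def lam (h : Sol c ψ C ρ) (p : EuclideanSpace ℝ (Fin n)) (r : ℝ) :
    EuclideanSpace ℝ (Fin n) →ₗ[ℝ] Lp E 2 (muB n) where
  toFun v := jL (cres (fun z => r • fderiv ℝ ψ (p + r • z) v) (h.cl' p r v))
  map_add' v w := by
    rw [jL_add]
    exact jL_congr _ _ _ _ fun z => by rw [map_add, smul_add]
  map_smul' t v := by
    rw [RingHom.id_apply, jL_smul]
    exact jL_congr _ _ _ _ fun z => by rw [map_smul, smul_comm]

lemma u_norm_sq (h : Sol c ψ C ρ) (p : EuclideanSpace ℝ (Fin n)) {r : ℝ} (hr : 0 < r) :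
    r ^ n * ‖h.u p r‖ ^ 2 = ∫ x in closedBall p r, ‖ψ x‖ ^ 2 := by
  rw [ball_scale _ p hr, u, jL_norm_sq]

/-- the defect of homogeneity -/
def G (ψ : EuclideanSpace ℝ (Fin n) → E) (q : ℝ) (p x : EuclideanSpace ℝ (Fin n)) : E :=
  fderiv ℝ ψ x (x - p) - q • ψ x

lemma G_cont (h : Sol c ψ C ρ) (q : ℝ) (p : EuclideanSpace ℝ (Fin n)) : Continuous (G ψ q p) := by
  have := h.cfd
  have := h.cd.continuous
  unfold G
  fun_prop

lemma G_norm_sq (h : Sol c ψ C ρ) (p : EuclideanSpace ℝ (Fin n)) {r : ℝ} (hr : 0 < r) (q : ℝ) :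
    r ^ n * ‖h.a p r + h.f p r - q • h.u p r‖ ^ 2 = ∫ x in closedBall p r, ‖G ψ q p x‖ ^ 2 := by
  rw [ball_scale _ p hr, h.a_add_f, u, jL_smul, jL_sub, jL_norm_sq]
  congr 1
  refine integral_congr_ae (Eventually.of_forall fun z => ?_)
  simp only [G, add_sub_cancel_left, map_smul]

lemma int_mono {F : EuclideanSpace ℝ (Fin n) → E} (hF : Continuous F)
    {p q : EuclideanSpace ℝ (Fin n)} {r s : ℝ} (hsub : closedBall p r ⊆ closedBall q s) :
    ∫ x in closedBall p r, ‖F x‖ ^ 2 ≤ ∫ x in closedBall q s, ‖F x‖ ^ 2 := by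
  refine setIntegral_mono_set ?_ ?_ hsub.eventuallyLE
  · exact (hF.norm.pow 2).continuousOn.integrableOn_compact (isCompact_closedBall _ _)
  · exact Eventually.of_forall fun x => by positivity

lemma pinch_int [CompleteSpace E] (h : Sol c ψ C ρ)
    (hne : ∃ x ∈ ball (0 : EuclideanSpace ℝ (Fin n)) ρ, ψ x ≠ 0)
    {x y : EuclideanSpace ℝ (Fin n)} {r q δ : ℝ} (hr : 0 < r) (hyx : dist y x ≤ r)
    (hrR : 3 * r < ρ - ‖y‖) (hδ : 0 ≤ δ)
    (hN : ∀ s ∈ Set.Icc (2 * r) (3 * r), |h.N y s - q| ≤ δ) :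
    ∫ z in closedBall x r, ‖G ψ q y z‖ ^ 2 ≤
      3 * (6 * δ + δ ^ 2 + 18 * C ^ 2 * r ^ 2) * ∫ z in closedBall x (4 * r), ‖ψ z‖ ^ 2 := by
  obtain ⟨s, hs, hle⟩ := (h.freq y).pinch hr hrR hδ (h.unique_cont hne y) hN
  have hs0 : 0 < s := by linarith [hs.1]
  calc ∫ z in closedBall x r, ‖G ψ q y z‖ ^ 2 ≤ ∫ z in closedBall y s, ‖G ψ q y z‖ ^ 2 := by
        apply int_mono (h.G_cont q y)
        apply closedBall_subset_closedBall'
        rw [dist_comm]; linarith [hs.1]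
    _ = s ^ n * ‖h.a y s + h.f y s - q • h.u y s‖ ^ 2 := (h.G_norm_sq y hs0 q).symm
    _ ≤ s ^ n * (3 * (6 * δ + δ ^ 2 + 18 * C ^ 2 * r ^ 2) * ‖h.u y s‖ ^ 2) := by gcongr
    _ = 3 * (6 * δ + δ ^ 2 + 18 * C ^ 2 * r ^ 2) * ∫ z in closedBall y s, ‖ψ z‖ ^ 2 := by
        rw [← h.u_norm_sq y hs0]; ring
    _ ≤ _ := by
        refine mul_le_mul_of_nonneg_left ?_ (by positivity)
        apply int_mono h.cd.continuous
        apply closedBall_subset_closedBall'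
        linarith [hs.2]

lemma doubling [CompleteSpace E] (h : Sol c ψ C ρ)
    (hne : ∃ x ∈ ball (0 : EuclideanSpace ℝ (Fin n)) ρ, ψ x ≠ 0)
    {x : EuclideanSpace ℝ (Fin n)} {r K : ℝ} (hr : 0 < r)
    (hrR : 4 * r < ρ - ‖x‖) (hN : ∀ s ∈ Set.Ioc r (4 * r), h.N x s ≤ K) :
    ‖h.u x (4 * r)‖ ^ 2 ≤ 4 ^ (2 * K) * Real.exp (6 * C * r) * ‖h.u x r‖ ^ 2 := by
  have := (h.freq x).growth hr (by linarith) hrR (fun s hs => h.unique_cont hne x s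
    ⟨by linarith [hs.1], by linarith [hs.2]⟩) hN
  have e1 : (4 * r) ^ (-(2 * K)) = ((4:ℝ) ^ (2 * K))⁻¹ * r ^ (-(2 * K)) := by
    rw [Real.mul_rpow (by norm_num) hr.le, Real.rpow_neg (by norm_num)]
  have e2 : Real.exp (-(2 * C * (4 * r))) = (Real.exp (6 * C * r))⁻¹ * Real.exp (-(2 * C * r)) := by
    rw [← Real.exp_neg, ← Real.exp_add]; ring_nf
  rw [e1, e2] at this
  have p1 : 0 < r ^ (-(2 * K)) * Real.exp (-(2 * C * r)) := by positivity
  have p2 : 0 < (4:ℝ) ^ (2 * K) * Real.exp (6 * C * r) := by positivity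
  have h3 : ‖h.u x (4 * r)‖ ^ 2 * ((4:ℝ) ^ (2 * K) * Real.exp (6 * C * r))⁻¹ ≤ ‖h.u x r‖ ^ 2 := by
    refine le_of_mul_le_mul_right ?_ p1
    calc _ = ‖h.u x (4 * r)‖ ^ 2 * (((4:ℝ) ^ (2 * K))⁻¹ * r ^ (-(2 * K))) *
          ((Real.exp (6 * C * r))⁻¹ * Real.exp (-(2 * C * r))) := by rw [mul_inv]; ring
      _ ≤ _ := this
      _ = _ := by ring
  rw [← div_eq_mul_inv, div_le_iff₀ p2] at h3
  linarith

lemma lam_le [CompleteSpace E] (h : Sol c ψ C ρ)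
    (hne : ∃ x ∈ ball (0 : EuclideanSpace ℝ (Fin n)) ρ, ψ x ≠ 0)
    {x y : EuclideanSpace ℝ (Fin n)} {r q δ K : ℝ} (hr : 0 < r) (hyx : dist y x ≤ r)
    (hy : 4 * r < ρ - ‖y‖) (hx : 4 * r < ρ - ‖x‖) (hδ : 0 ≤ δ)
    (hNy : ∀ s ∈ Set.Ioc r (4 * r), |h.N y s - q| ≤ δ)
    (hNx : ∀ s ∈ Set.Ioc r (4 * r), |h.N x s - q| ≤ δ)
    (hK : ∀ s ∈ Set.Ioc r (4 * r), h.N x s ≤ K) :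
    ‖h.lam x r (y - x)‖ ^ 2 ≤ r ^ 2 * (4 ^ (n + 1) * 4 ^ (2 * K) * Real.exp (6 * C * r) *
      (3 * (6 * δ + δ ^ 2 + 18 * C ^ 2 * r ^ 2))) * ‖h.u x r‖ ^ 2 := by
  have hsub : Set.Icc (2 * r) (3 * r) ⊆ Set.Ioc r (4 * r) := fun s hs =>
    ⟨by linarith [hs.1], by linarith [hs.2]⟩
  have h1 := h.pinch_int hne hr hyx (by linarith) hδ (fun s hs => hNy s (hsub hs))
  have h2 := h.pinch_int (x := x) (y := x) hne hr (by simpa using hr.le) (by linarith) hδ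
    (fun s hs => hNx s (hsub hs))
  set η := 3 * (6 * δ + δ ^ 2 + 18 * C ^ 2 * r ^ 2) with hη
  have hη0 : 0 ≤ η := by positivity
  have h3 : r ^ n * ‖h.lam x r (y - x)‖ ^ 2 =
      r ^ 2 * ∫ z in closedBall x r, ‖fderiv ℝ ψ z (y - x)‖ ^ 2 := by
    rw [ball_scale _ x hr]
    have : ‖h.lam x r (y - x)‖ ^ 2 = ∫ z in closedBall (0 : EuclideanSpace ℝ (Fin n)) 1,
      ‖r • fderiv ℝ ψ (x + r • z) (y - x)‖ ^ 2 := jL_norm_sq _ _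
    rw [this]
    simp only [norm_smul, mul_pow, Real.norm_eq_abs, sq_abs, integral_const_mul]
    ring
  have ci : ∀ F : EuclideanSpace ℝ (Fin n) → E, Continuous F →
      IntegrableOn (fun z => ‖F z‖ ^ 2) (closedBall x r) := fun F hF =>
    (hF.norm.pow 2).continuousOn.integrableOn_compact (isCompact_closedBall _ _)
  have h4 : ∫ z in closedBall x r, ‖fderiv ℝ ψ z (y - x)‖ ^ 2 ≤
      2 * (∫ z in closedBall x r, ‖G ψ q x z‖ ^ 2) + 2 * ∫ z in closedBall x r, ‖G ψ q y z‖ ^ 2 := by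
    rw [← integral_const_mul, ← integral_const_mul, ← integral_add
      ((ci _ (h.G_cont q x)).const_mul 2) ((ci _ (h.G_cont q y)).const_mul 2)]
    have := h.cfd
    refine integral_mono (ci (fun z => fderiv ℝ ψ z (y - x)) (by fun_prop))
      (((ci _ (h.G_cont q x)).const_mul 2).add ((ci _ (h.G_cont q y)).const_mul 2)) ?_
    intro z
    have e : fderiv ℝ ψ z (y - x) = G ψ q x z - G ψ q y z := by
      simp only [G, map_sub]; abel
    simp only [e]
    have := norm_sub_le (G ψ q x z) (G ψ q y z)
    nlinarith [sq_nonneg (‖G ψ q x z‖ - ‖G ψ q y z‖), norm_nonneg (G ψ q x z - G ψ q y z)]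
  have h5 := h.doubling hne hr hx hK
  have h6 := h.u_norm_sq x (r := 4 * r) (by linarith)
  have hrn : 0 < r ^ n := by positivity
  refine le_of_mul_le_mul_left ?_ hrn
  rw [h3]
  calc r ^ 2 * ∫ z in closedBall x r, ‖fderiv ℝ ψ z (y - x)‖ ^ 2
      ≤ r ^ 2 * (4 * η * ∫ z in closedBall x (4 * r), ‖ψ z‖ ^ 2) := by
        gcongr; linarith
    _ = r ^ 2 * (4 * η * ((4 * r) ^ n * ‖h.u x (4 * r)‖ ^ 2)) := by rw [h6]
    _ ≤ r ^ 2 * (4 * η * ((4 * r) ^ n * (4 ^ (2 * K) * Real.exp (6 * C * r) * ‖h.u x r‖ ^ 2))) := by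
        gcongr
    _ = _ := by rw [mul_pow]; ring

end Sol

lemma jL_sum {n : ℕ} {E : Type*} [NormedAddCommGroup E] [InnerProductSpace ℝ E] {ι : Type*}
    (s : Finset ι) (F : ι → EuclideanSpace ℝ (Fin n) → E) (hF : ∀ i, Continuous (F i)) :
    ∑ i ∈ s, jL (cres (F i) (hF i)) =
      jL (cres (fun z => ∑ i ∈ s, F i z) (continuous_finsetSum _ fun i _ => hF i)) := by
  rw [← map_sum]
  congr 1
  ext z
  simp [cres]

namespace Sol
variable {n : ℕ} {E : Type*} [NormedAddCommGroup E] [InnerProductSpace ℝ E]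
variable {c : Fin n → E →L[ℝ] E} {ψ : EuclideanSpace ℝ (Fin n) → E} {C ρ : ℝ}

lemma sum_cm_le (h : Sol c ψ C ρ) (b : OrthonormalBasis (Fin n) ℝ (EuclideanSpace ℝ (Fin n)))
    {x : EuclideanSpace ℝ (Fin n)} {r : ℝ} (hr : 0 < r) (hx : r < ρ - ‖x‖) (i₀ : Fin n) :
    ‖h.lam x r (b i₀)‖ ≤ C * r * ‖h.u x r‖ + ∑ i ∈ Finset.univ.erase i₀, ‖h.lam x r (b i)‖ := by
  have hc := h.cfd
  have hF : ∀ i, Continuous (fun z => cm c (b i) (r • fderiv ℝ ψ (x + r • z) (b i))) := by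
    intro i; fun_prop
  have hD : Continuous (fun z => r • dirA c (fderiv ℝ ψ (x + r • z))) := by
    simp only [dirA]; fun_prop
  have e : ∑ i, jL (cres _ (hF i)) = jL (cres _ hD) := by
    rw [jL_sum]
    refine jL_congr _ _ _ _ fun z => ?_
    rw [dirA_eq_basis b, Finset.smul_sum]
    exact Finset.sum_congr rfl fun i _ => by rw [map_smul]
  have hn1 : ∀ i, ‖jL (cres _ (hF i))‖ ≤ 1 * ‖h.lam x r (b i)‖ := by
    intro i
    refine jL_norm_le _ _ _ _ _ fun z _ => ?_
    rw [h.cl.cm_norm, b.norm_eq_one]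
  have hn2 : ∀ i, ‖h.lam x r (b i)‖ ≤ 1 * ‖jL (cres _ (hF i))‖ := by
    intro i
    refine jL_norm_le _ _ _ _ _ fun z _ => ?_
    rw [h.cl.cm_norm, b.norm_eq_one, one_mul, one_mul]
  have hn3 : ‖jL (cres _ hD)‖ ≤ C * r * ‖h.u x r‖ := by
    refine jL_norm_le _ _ _ _ _ fun z hz => ?_
    rw [norm_smul, Real.norm_eq_abs, abs_of_pos hr]
    have := h.hb _ (mem_ball_of x z hr hx hz)
    calc _ ≤ r * (C * ‖ψ (x + r • z)‖) := by gcongr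
      _ = _ := by ring
  rw [← Finset.add_sum_erase _ _ (Finset.mem_univ i₀)] at e
  calc ‖h.lam x r (b i₀)‖ ≤ ‖jL (cres _ (hF i₀))‖ := by simpa using hn2 i₀
    _ = ‖jL (cres _ hD) - ∑ i ∈ Finset.univ.erase i₀, jL (cres _ (hF i))‖ := by
        rw [← e, add_sub_cancel_right]
    _ ≤ ‖jL (cres _ hD)‖ + ‖∑ i ∈ Finset.univ.erase i₀, jL (cres _ (hF i))‖ := norm_sub_le _ _
    _ ≤ C * r * ‖h.u x r‖ + ∑ i ∈ Finset.univ.erase i₀, ‖h.lam x r (b i)‖ := by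
        gcongr
        refine (norm_sum_le _ _).trans (Finset.sum_le_sum fun i _ => ?_)
        simpa using hn1 i

lemma euler_le (h : Sol c ψ C ρ) (b : OrthonormalBasis (Fin n) ℝ (EuclideanSpace ℝ (Fin n)))
    (x : EuclideanSpace ℝ (Fin n)) (r : ℝ) :
    ‖h.a x r + h.f x r‖ ≤ ∑ i, ‖h.lam x r (b i)‖ := by
  have hc := h.cfd
  have hF : ∀ i, Continuous (fun z => inner ℝ (b i) z • (r • fderiv ℝ ψ (x + r • z) (b i))) := by
    intro i; fun_prop
  have e : ∑ i, jL (cres _ (hF i)) = h.a x r + h.f x r := by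
    rw [jL_sum, h.a_add_f]
    refine jL_congr _ _ _ _ fun z => ?_
    have hA : ∀ A : EuclideanSpace ℝ (Fin n) →L[ℝ] E, A z = ∑ i, inner ℝ (b i) z • A (b i) := by
      intro A
      conv_lhs => rw [← b.sum_repr' z]
      simp only [map_sum, map_smul]
    rw [hA, Finset.smul_sum]
    exact Finset.sum_congr rfl fun i _ => smul_comm _ _ _
  rw [← e]
  refine (norm_sum_le _ _).trans (Finset.sum_le_sum fun i _ => ?_)
  rw [← one_mul ‖h.lam x r (b i)‖]
  refine jL_norm_le _ _ _ _ _ fun z hz => ?_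
  rw [norm_smul]
  gcongr
  rw [mem_closedBall_zero_iff] at hz
  refine (norm_inner_le_norm _ _).trans ?_
  rw [b.norm_eq_one, one_mul]; exact hz

lemma two_indices [CompleteSpace E] (h : Sol c ψ C ρ) (hn : 0 < n)
    (hne : ∃ x ∈ ball (0 : EuclideanSpace ℝ (Fin n)) ρ, ψ x ≠ 0)
    (b : OrthonormalBasis (Fin n) ℝ (EuclideanSpace ℝ (Fin n)))
    {x : EuclideanSpace ℝ (Fin n)} {r : ℝ} (hr : 0 < r) (hx : r < ρ - ‖x‖) (hCr : C * r ≤ 1 / 16)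
    (hN : 1 / 2 ≤ h.N x r) :
    ∃ i₁ i₂, i₁ ≠ i₂ ∧ (1 / (16 * n)) * ‖h.u x r‖ ≤ ‖h.lam x r (b i₁)‖ ∧
      (1 / (16 * n)) * ‖h.u x r‖ ≤ ‖h.lam x r (b i₂)‖ := by
  by_contra! hcon
  have hu : 0 < ‖h.u x r‖ := norm_pos_iff.2 (h.unique_cont hne x r ⟨hr, hx⟩)
  have hi : ∃ i₀ : Fin n, ∀ i, i ≠ i₀ → ‖h.lam x r (b i)‖ ≤ (1 / (16 * n)) * ‖h.u x r‖ := by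
    by_cases hex : ∃ i₀, (1 / (16 * n)) * ‖h.u x r‖ ≤ ‖h.lam x r (b i₀)‖
    · obtain ⟨i₀, h0⟩ := hex
      exact ⟨i₀, fun i hi => (hcon i₀ i hi.symm h0).le⟩
    · push Not at hex
      exact ⟨⟨0, hn⟩, fun i _ => (hex i).le⟩
  obtain ⟨i₀, h0⟩ := hi
  have hn' : (0:ℝ) < n := by exact_mod_cast hn
  have hsum : ∑ i ∈ Finset.univ.erase i₀, ‖h.lam x r (b i)‖ ≤ (1 / 16) * ‖h.u x r‖ := by
    calc _ ≤ ∑ i ∈ Finset.univ.erase i₀, (1 / (16 * n)) * ‖h.u x r‖ :=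
          Finset.sum_le_sum fun i hi => h0 i (Finset.ne_of_mem_erase hi)
      _ ≤ ∑ i : Fin n, (1 / (16 * n)) * ‖h.u x r‖ :=
          Finset.sum_le_sum_of_subset_of_nonneg (Finset.erase_subset _ _)
            (fun _ _ _ => by positivity)
      _ = _ := by
          rw [Finset.sum_const, Finset.card_univ, Fintype.card_fin, nsmul_eq_mul]
          field_simp
  have h1 := h.sum_cm_le b hr hx i₀
  have h2 := h.euler_le b x r
  rw [← Finset.add_sum_erase _ _ (Finset.mem_univ i₀)] at h2
  have hN' : inner ℝ (h.a x r) (h.u x r) = h.N x r * ‖h.u x r‖ ^ 2 := by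
    rw [N, freqN]; field_simp
  have hb := (h.freq x).bd r ⟨hr, hx⟩
  have hf := abs_real_inner_le_norm (h.f x r) (h.u x r)
  have hcs := real_inner_le_norm (h.a x r + h.f x r) (h.u x r)
  rw [inner_add_left, hN'] at hcs
  have hf' := neg_abs_le (inner ℝ (h.f x r) (h.u x r))
  have hu2 : 0 < ‖h.u x r‖ ^ 2 := by positivity
  have k1 : ‖h.f x r‖ * ‖h.u x r‖ ≤ 1 / 16 * ‖h.u x r‖ ^ 2 := by
    calc _ ≤ (C * r * ‖h.u x r‖) * ‖h.u x r‖ := by gcongr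
      _ ≤ (1 / 16 * ‖h.u x r‖) * ‖h.u x r‖ := by gcongr
      _ = _ := by ring
  have k2 : ‖h.a x r + h.f x r‖ * ‖h.u x r‖ ≤ 3 / 16 * ‖h.u x r‖ ^ 2 := by
    have : C * r * ‖h.u x r‖ ≤ 1 / 16 * ‖h.u x r‖ := by gcongr
    calc _ ≤ (3 / 16 * ‖h.u x r‖) * ‖h.u x r‖ := by gcongr; linarith
      _ = _ := by ring
  have k3 : 1 / 2 * ‖h.u x r‖ ^ 2 ≤ h.N x r * ‖h.u x r‖ ^ 2 := by gcongr
  linarith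

/-- covering of a piece of the nodal set at one scale -/
lemma piece_cover [CompleteSpace E] (h : Sol c ψ C ρ) (hn : 0 < n)
    (hne : ∃ x ∈ ball (0 : EuclideanSpace ℝ (Fin n)) ρ, ψ x ≠ 0)
    (A : Set (EuclideanSpace ℝ (Fin n))) {q δ K r₁ : ℝ} {m : ℕ} (hm : 1 ≤ m)
    (hδ : 0 ≤ δ) (hCr : C * r₁ ≤ 1 / 16) 
    (hsmall : (16 * n * m) ^ 2 * (4 ^ (n + 1) * 4 ^ (2 * K) * Real.exp (6 * C * r₁) *
      (3 * (6 * δ + δ ^ 2 + 18 * C ^ 2 * r₁ ^ 2))) ≤ 1)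
    (hA1 : ∀ x ∈ A, 4 * r₁ < ρ - ‖x‖)
    (hA : ∀ x ∈ A, ∀ s ∈ Set.Ioc 0 (4 * r₁), |h.N x s - q| ≤ δ ∧ h.N x s ≤ K ∧ 1 / 2 ≤ h.N x s)
    (x : EuclideanSpace ℝ (Fin n)) (hx : x ∈ A) (r : ℝ) (hr : r ∈ Set.Ioc 0 r₁) :
    ∃ F : Finset (EuclideanSpace ℝ (Fin n)), F.card ≤ 9 * (2 * m + 1) ^ (n - 2) ∧ ↑F ⊆ A ∧
      A ∩ closedBall x r ⊆ ⋃ c ∈ F, closedBall c (√n / m * r) := by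
  obtain ⟨hr0, hr1⟩ := hr
  have hC := h.hC
  have hCr' : C * r ≤ 1 / 16 := le_trans (by gcongr) hCr
  have hxR := hA1 x hx
  obtain ⟨b, hb⟩ := diag_basis (LinearMap.toContinuousLinearMap (h.lam x r))
  obtain ⟨i₁, i₂, hi, hi1, hi2⟩ := h.two_indices hn hne b hr0 (by linarith) hCr'
    (hA x hx r ⟨hr0, by linarith⟩).2.2
  have hu : 0 < ‖h.u x r‖ := norm_pos_iff.2 (h.unique_cont hne x r ⟨hr0, by linarith⟩)
  have hn' : (0:ℝ) < n := by exact_mod_cast hn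
  have hm' : (0:ℝ) < m := by exact_mod_cast hm
  have hsub : Set.Ioc r (4 * r) ⊆ Set.Ioc 0 (4 * r₁) := fun s hs =>
    ⟨hr0.trans hs.1, by linarith [hs.2]⟩
  have hlam : ∀ y ∈ A ∩ closedBall x r, 16 * n * m * ‖h.lam x r (y - x)‖ ≤ r * ‖h.u x r‖ := by
    rintro y ⟨hyA, hyx⟩
    have hyR := hA1 y hyA
    have := h.lam_le hne hr0 hyx (by linarith) (by linarith) hδ
      (fun s hs => (hA y hyA s (hsub hs)).1) (fun s hs => (hA x hx s (hsub hs)).1)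
      (fun s hs => (hA x hx s (hsub hs)).2.1)
    refine (sq_le_sq₀ (by positivity) (by positivity)).1 ?_
    calc (16 * n * m * ‖h.lam x r (y - x)‖) ^ 2 = (16 * n * m) ^ 2 * ‖h.lam x r (y - x)‖ ^ 2 := by ring
      _ ≤ (16 * n * m) ^ 2 * (r ^ 2 * (4 ^ (n + 1) * 4 ^ (2 * K) * Real.exp (6 * C * r) *
          (3 * (6 * δ + δ ^ 2 + 18 * C ^ 2 * r ^ 2))) * ‖h.u x r‖ ^ 2) := by gcongr
      _ ≤ (16 * n * m) ^ 2 * (r ^ 2 * (4 ^ (n + 1) * 4 ^ (2 * K) * Real.exp (6 * C * r₁) *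
          (3 * (6 * δ + δ ^ 2 + 18 * C ^ 2 * r₁ ^ 2))) * ‖h.u x r‖ ^ 2) := by gcongr
      _ = (r ^ 2 * ‖h.u x r‖ ^ 2) * ((16 * n * m) ^ 2 * (4 ^ (n + 1) * 4 ^ (2 * K) *
          Real.exp (6 * C * r₁) * (3 * (6 * δ + δ ^ 2 + 18 * C ^ 2 * r₁ ^ 2)))) := by ring
      _ ≤ (r ^ 2 * ‖h.u x r‖ ^ 2) * 1 := by gcongr
      _ = _ := by ring
  have hco : ∀ i, (1 / (16 * n)) * ‖h.u x r‖ ≤ ‖h.lam x r (b i)‖ →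
      ∀ y ∈ A ∩ closedBall x r, |inner ℝ (b i) (y - x)| ≤ r / m := by
    intro i hi y hy
    have h1 := hb (y - x) i
    simp only [LinearMap.coe_toContinuousLinearMap'] at h1
    have h2 := hlam y hy
    rw [le_div_iff₀ hm']
    refine le_of_mul_le_mul_right ?_ hu
    calc |inner ℝ (b i) (y - x)| * m * ‖h.u x r‖
        = 16 * n * m * (|inner ℝ (b i) (y - x)| * ((1 / (16 * n)) * ‖h.u x r‖)) := by field_simp
      _ ≤ 16 * n * m * (|inner ℝ (b i) (y - x)| * ‖h.lam x r (b i)‖) := by gcongr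
      _ ≤ 16 * n * m * ‖h.lam x r (y - x)‖ := by gcongr
      _ ≤ _ := h2
  obtain ⟨F, hF1, hF2, hF3⟩ := grid_cover b (A ∩ closedBall x r) x r hr0 m hm
    Set.inter_subset_right i₁ i₂ hi (hco i₁ hi1) (hco i₂ hi2)
  exact ⟨F, hF1, hF2.trans Set.inter_subset_left, hF3⟩

end Sol

lemma choose_m (n : ℕ) (hn : 2 ≤ n) (ε : ℝ) (hε : 0 < ε) :
    ∃ m : ℕ, 1 ≤ m ∧ √(n:ℝ) / m < 1 ∧
      ((9 * (2 * m + 1) ^ (n - 2) : ℕ) : ℝ) * (√(n:ℝ) / m) ^ (((n - 2 : ℕ) : ℝ) + ε) ≤ 1 := by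
  have h1 : Tendsto (fun m : ℕ => (9 * 3 ^ (n - 2) * (√(n:ℝ)) ^ (((n - 2 : ℕ) : ℝ) + ε)) *
      (m : ℝ) ^ (-ε)) atTop (nhds ((9 * 3 ^ (n - 2) * (√(n:ℝ)) ^ (((n - 2 : ℕ) : ℝ) + ε)) * 0)) :=
    ((tendsto_rpow_neg_atTop hε).comp tendsto_natCast_atTop_atTop).const_mul _
  rw [mul_zero] at h1
  have h2 : Tendsto (fun m : ℕ => √(n:ℝ) / m) atTop (nhds 0) :=
    tendsto_const_nhds.div_atTop tendsto_natCast_atTop_atTop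
  obtain ⟨m, hm1, hm2, hm3⟩ := ((h1.eventually_le_const zero_lt_one).and
    ((h2.eventually_lt_const zero_lt_one).and (eventually_ge_atTop 1))).exists
  refine ⟨m, hm3, hm2, le_trans ?_ hm1⟩
  have hm' : (0:ℝ) < m := by exact_mod_cast hm3
  have hm1' : (1:ℝ) ≤ m := by exact_mod_cast hm3
  have e : (√(n:ℝ) / m) ^ (((n - 2 : ℕ) : ℝ) + ε) =
      √(n:ℝ) ^ (((n - 2 : ℕ) : ℝ) + ε) * ((m:ℝ) ^ (n - 2))⁻¹ * (m:ℝ) ^ (-ε) := by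
    rw [Real.div_rpow (by positivity) hm'.le, Real.rpow_add hm' _ ε, Real.rpow_natCast,
      Real.rpow_neg hm'.le, div_eq_mul_inv, mul_inv]
    ring
  rw [e]
  push_cast
  calc _ ≤ 9 * (3 * (m:ℝ)) ^ (n - 2) * (√(n:ℝ) ^ (((n - 2 : ℕ) : ℝ) + ε) * ((m:ℝ) ^ (n - 2))⁻¹ *
        (m:ℝ) ^ (-ε)) := by gcongr; linarith
    _ = _ := by rw [mul_pow]; field_simp

lemma choose_delta (B C : ℝ) (hB : 0 ≤ B) (hC : 0 ≤ C) : ∃ t : ℝ, 0 < t ∧ ∀ r, 0 < r → r ≤ t →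
    C * r ≤ 1 / 16 ∧ B * (Real.exp (6 * C * r) * (3 * (6 * t + t ^ 2 + 18 * C ^ 2 * r ^ 2))) ≤ 1 := by
  have h1 : Tendsto (fun t : ℝ => B * (Real.exp (6 * C * t) *
      (3 * (6 * t + t ^ 2 + 18 * C ^ 2 * t ^ 2)))) (nhds 0) (nhds 0) := by
    have : Continuous (fun t : ℝ => B * (Real.exp (6 * C * t) *
      (3 * (6 * t + t ^ 2 + 18 * C ^ 2 * t ^ 2)))) := by fun_prop
    simpa using this.tendsto 0
  have h2 : Tendsto (fun t : ℝ => C * t) (nhds 0) (nhds 0) := by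
    have : Continuous (fun t : ℝ => C * t) := by fun_prop
    simpa using this.tendsto 0
  have h3 := ((h1.eventually_le_const zero_lt_one).and
    (h2.eventually_le_const (show (0:ℝ) < 1 / 16 by norm_num))).filter_mono
    (nhdsWithin_le_nhds (s := Set.Ioi 0))
  obtain ⟨t, ⟨ht1, ht2⟩, ht0⟩ := (h3.and self_mem_nhdsWithin).exists
  have ht0' : 0 < t := ht0
  refine ⟨t, ht0, fun r hr hrt => ⟨le_trans (by gcongr) ht2, le_trans ?_ ht1⟩⟩
  gcongr

namespace Sol
variable {n : ℕ} {E : Type*} [NormedAddCommGroup E] [InnerProductSpace ℝ E]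
variable {c : Fin n → E →L[ℝ] E} {ψ : EuclideanSpace ℝ (Fin n) → E} {C ρ : ℝ}

lemma N_tendsto [CompleteSpace E] (h : Sol c ψ C ρ)
    (hne : ∃ x ∈ ball (0 : EuclideanSpace ℝ (Fin n)) ρ, ψ x ≠ 0)
    (p : EuclideanSpace ℝ (Fin n)) (hp : ψ p = 0) (hpρ : ‖p‖ < ρ) :
    ∃ ν : ℝ, 1 ≤ ν ∧ Tendsto (h.N p) (nhdsWithin 0 (Set.Ioi 0)) (nhds ν) := by
  have hR : 0 < ρ - ‖p‖ := by linarith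
  have hlow := h.N_lower hne p hp
  have hmono : MonotoneOn (fun r => h.N p r + C ^ 2 * r ^ 2 / 2) (Set.Ioo 0 (ρ - ‖p‖)) := by
    intro r hr s hs hrs
    exact (h.freq p).mono hr.1 hrs hs.2 (fun t ht => h.unique_cont hne p t
      ⟨by linarith [hr.1, ht.1], by linarith [hs.2, ht.2]⟩)
  have hbdd : BddBelow ((fun r => h.N p r + C ^ 2 * r ^ 2 / 2) '' Set.Ioo 0 (ρ - ‖p‖)) :=
    ⟨1, by rintro _ ⟨r, hr, rfl⟩; exact hlow r hr⟩
  have ht := hmono.tendsto_nhdsWithin_Ioo_right (Set.nonempty_Ioo.2 hR) hbdd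
  have h2 : Tendsto (fun r : ℝ => C ^ 2 * r ^ 2 / 2) (nhdsWithin 0 (Set.Ioi 0)) (nhds 0) := by
    have : Continuous (fun t : ℝ => C ^ 2 * t ^ 2 / 2) := by fun_prop
    have := this.tendsto 0
    simp only [ne_eq, OfNat.ofNat_ne_zero, not_false_eq_true, zero_pow, mul_zero, zero_div] at this
    exact this.mono_left nhdsWithin_le_nhds
  refine ⟨_, ?_, by simpa using ht.sub h2⟩
  refine le_csInf ((Set.nonempty_Ioo.2 hR).image _) ?_
  rintro _ ⟨r, hr, rfl⟩; exact hlow r hr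

theorem dim_le [CompleteSpace E] (h : Sol c ψ C ρ) (hn : 2 ≤ n)
    (hne : ∃ x ∈ ball (0 : EuclideanSpace ℝ (Fin n)) ρ, ψ x ≠ 0) :
    dimH {x | x ∈ ball (0 : EuclideanSpace ℝ (Fin n)) ρ ∧ ψ x = 0} ≤ ((n - 2 : ℕ) : ℝ≥0∞) := by
  refine ENNReal.le_of_forall_pos_le_add fun ε hε _ => ?_
  obtain ⟨m, hm1, hm2, hm3⟩ := choose_m n hn ε hε
  have hdel : ∀ k : ℕ, ∃ t : ℝ, 0 < t ∧ ∀ r, 0 < r → r ≤ t → C * r ≤ 1 / 16 ∧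
      ((16 * n * m) ^ 2 * (4 ^ (n + 1) * 4 ^ (2 * (k:ℝ)))) *
        (Real.exp (6 * C * r) * (3 * (6 * t + t ^ 2 + 18 * C ^ 2 * r ^ 2))) ≤ 1 :=
    fun k => choose_delta _ C (by positivity) h.hC
  choose t ht0 ht using hdel
  let rr : ℕ → ℕ → ℝ := fun k j => min (t k) (1 / (j + 1))
  have hrr : ∀ k j, 0 < rr k j := fun k j => lt_min (ht0 k) (by positivity)
  let A : ℕ × ℚ × ℕ → Set (EuclideanSpace ℝ (Fin n)) := fun i =>
    {x | 4 * rr i.1 i.2.2 < ρ - ‖x‖ ∧ ∀ s ∈ Set.Ioc 0 (4 * rr i.1 i.2.2),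
      |h.N x s - i.2.1| ≤ t i.1 ∧ h.N x s ≤ i.1 ∧ 1 / 2 ≤ h.N x s}
  have hcover : {x | x ∈ ball (0 : EuclideanSpace ℝ (Fin n)) ρ ∧ ψ x = 0} ⊆ ⋃ i, A i := by
    rintro x ⟨hx, hx0⟩
    rw [mem_ball_zero_iff] at hx
    obtain ⟨ν, hν1, hν⟩ := h.N_tendsto hne x hx0 hx
    obtain ⟨k, hk⟩ := exists_nat_gt ν
    obtain ⟨q, hq1, hq2⟩ := exists_rat_btwn (show ν - t k / 2 < ν by linarith [ht0 k])
    have he : ∀ᶠ s in nhdsWithin (0:ℝ) (Set.Ioi 0), ν - t k / 2 < h.N x s ∧ h.N x s < ν + t k / 2 ∧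
        h.N x s < k ∧ 1 / 2 < h.N x s :=
      (hν.eventually_const_lt (by linarith [ht0 k])).and
      ((hν.eventually_lt_const (by linarith [ht0 k])).and
      ((hν.eventually_lt_const hk).and (hν.eventually_const_lt (by linarith))))
    obtain ⟨d, hd0, hd⟩ := mem_nhdsGT_iff_exists_Ioo_subset.1 he
    have hd0' : (0:ℝ) < d := hd0
    obtain ⟨j, hj⟩ := exists_nat_one_div_lt (show 0 < min d (ρ - ‖x‖) / 4 by
      have := lt_min hd0' (show 0 < ρ - ‖x‖ by linarith); linarith)
    have hrj : 4 * rr k j < min d (ρ - ‖x‖) := by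
      have : rr k j ≤ 1 / (j + 1) := min_le_right _ _
      linarith
    rw [Set.mem_iUnion]
    refine ⟨(k, q, j), hrj.trans_le (min_le_right _ _), fun s hs => ?_⟩
    have hs' : s ∈ Set.Ioo 0 d := ⟨hs.1, lt_of_le_of_lt hs.2 (hrj.trans_le (min_le_left _ _))⟩
    obtain ⟨g1, g2, g3, g4⟩ := hd hs'
    refine ⟨?_, g3.le, g4.le⟩
    rw [abs_le]
    constructor <;> simp only <;> linarith
  refine (dimH_mono hcover).trans ?_
  rw [dimH_iUnion]
  refine iSup_le fun i => ?_
  obtain ⟨k, q, j⟩ := i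
  have hbd := ht k (rr k j) (hrr k j) (min_le_left _ _)
  have hn' : (0:ℝ) < n := by exact_mod_cast (by omega : 0 < n)
  have hm' : (0:ℝ) < m := by exact_mod_cast hm1
  have := cover_dim (A (k, q, j)) (9 * (2 * m + 1) ^ (n - 2)) (√(n:ℝ) / m) (rr k j)
    (by positivity) hm2 (hrr k j) (((n - 2 : ℕ) : ℝ≥0) + ε) (by exact_mod_cast hm3)
    (fun x hx r hr => h.piece_cover (by omega) hne (A (k, q, j)) (q := q) (δ := t k) (K := k)
      (r₁ := rr k j) hm1 (ht0 k).le hbd.1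
      (by refine le_trans (le_of_eq ?_) hbd.2; ring)
      (fun x hx => hx.1) (fun x hx => hx.2) x hx r hr)
  refine this.trans (le_of_eq ?_)
  push_cast
  rfl

end Sol

section mat
open scoped ComplexOrder MatrixOrder
variable {n N : ℕ} {α : Fin n → Matrix (Fin N) (Fin N) ℂ}

lemma CliffordRel.sq (h : CliffordRel α) (j : Fin n) : α j * α j = -1 := by
  have := h j j
  rw [if_pos rfl, ← two_smul ℂ (α j * α j), neg_smul, ← smul_neg] at this
  exact smul_right_injective _ (two_ne_zero) this

lemma CliffordRel.anti (h : CliffordRel α) {j k : Fin n} (hjk : j ≠ k) :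
    α j * α k = - (α k * α j) := by
  have := h j k
  rw [if_neg hjk, smul_zero] at this
  exact eq_neg_of_add_eq_zero_left this

lemma CliffordRel.exists_inv (h : CliffordRel α) (s : Finset (Fin n)) :
    ∃ G : Matrix (Fin N) (Fin N) ℂ, G.PosDef ∧ ∀ j ∈ s, (α j)ᴴ * G * α j = G := by
  induction s using Finset.induction_on with
  | empty => exact ⟨1, Matrix.PosDef.one, by simp⟩
  | insert k s hk ih =>
    obtain ⟨G, hG, hinv⟩ := ih
    refine ⟨G + (α k)ᴴ * G * α k, hG.add_posSemidef (hG.posSemidef.conjTranspose_mul_mul_same _), ?_⟩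
    intro j hj
    rw [mul_add, add_mul]
    rcases Finset.mem_insert.1 hj with rfl | hj
    · have e : (α j)ᴴ * ((α j)ᴴ * G * α j) * α j = (α j * α j)ᴴ * G * (α j * α j) := by
        rw [conjTranspose_mul]; simp only [mul_assoc]
      rw [e, h.sq]
      simp [add_comm]
    · have hjk : j ≠ k := fun e => hk (e ▸ hj)
      have e : (α j)ᴴ * ((α k)ᴴ * G * α k) * α j = (α k * α j)ᴴ * G * (α k * α j) := by
        rw [conjTranspose_mul]; simp only [mul_assoc]
      have e2 : (α j * α k)ᴴ * G * (α j * α k) = (α k)ᴴ * ((α j)ᴴ * G * α j) * α k := by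
        rw [conjTranspose_mul]; simp only [mul_assoc]
      rw [e, h.anti hjk.symm, conjTranspose_neg]
      simp only [neg_mul, mul_neg, neg_neg]
      rw [e2, hinv j hj]

lemma CliffordRel.exists_conj (h : CliffordRel α) :
    ∃ (B : Matrix (Fin N) (Fin N) ℂ) (β : Fin n → Matrix (Fin N) (Fin N) ℂ), IsUnit B ∧
      CliffordRel β ∧ (∀ j, (β j)ᴴ = - β j) ∧ ∀ j, β j * B = B * α j := by
  obtain ⟨G, hG, hinv⟩ := h.exists_inv Finset.univ
  obtain ⟨B, hB, hGB⟩ := CStarAlgebra.isStrictlyPositive_iff_eq_star_mul_self.mp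
        hG.isStrictlyPositive
  rw [star_eq_conjTranspose] at hGB
  have hB' := hB
  obtain ⟨b, rfl⟩ := hB
  set B : Matrix (Fin N) (Fin N) ℂ := (b : Matrix (Fin N) (Fin N) ℂ)
  set D : Matrix (Fin N) (Fin N) ℂ := ((b⁻¹ : (Matrix (Fin N) (Fin N) ℂ)ˣ) : Matrix (Fin N) (Fin N) ℂ)
  have hBD : B * D = 1 := b.mul_inv
  have hDB : D * B = 1 := b.inv_mul
  have hDB' : ∀ X, D * (B * X) = X := fun X => by rw [← mul_assoc, hDB, one_mul]
  have hrel : CliffordRel (fun j => B * α j * D) := by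
    intro j k
    have e : ∀ j k, B * α j * D * (B * α k * D) = B * (α j * α k) * D := by
      intro j k
      simp only [mul_assoc, hDB']
    simp only [e]
    rw [← add_mul, ← mul_add, h j k]
    by_cases hjk : j = k
    · simp [hjk, hBD]
    · simp [hjk]
  refine ⟨B, fun j => B * α j * D, hB', hrel, fun j => ?_, fun j => ?_⟩
  · have hu : (B * α j * D)ᴴ * (B * α j * D) = 1 := by
      calc (B * α j * D)ᴴ * (B * α j * D) = Dᴴ * ((α j)ᴴ * (Bᴴ * B) * α j) * D := by
            simp only [conjTranspose_mul, mul_assoc]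
        _ = Dᴴ * (Bᴴ * B) * D := by rw [← hGB, hinv j (Finset.mem_univ j)]
        _ = (B * D)ᴴ * (B * D) := by simp only [conjTranspose_mul, mul_assoc]
        _ = 1 := by rw [hBD]; simp
    have hs := hrel.sq j
    calc (B * α j * D)ᴴ = - ((B * α j * D)ᴴ * ((B * α j * D) * (B * α j * D))) := by rw [hs]; simp
      _ = - (((B * α j * D)ᴴ * (B * α j * D)) * (B * α j * D)) := by rw [← mul_assoc]
      _ = - (B * α j * D) := by rw [hu, one_mul]
  · simp only [mul_assoc, hDB, mul_one]

end mat

section transfer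
variable {n N : ℕ}

/-- a complex matrix as a real-linear bounded operator -/
def rl (A : Matrix (Fin N) (Fin N) ℂ) : EuclideanSpace ℂ (Fin N) →L[ℝ] EuclideanSpace ℂ (Fin N) :=
  (LinearMap.toContinuousLinearMap (Matrix.toEuclideanLin A)).restrictScalars ℝ

lemma rl_apply (A : Matrix (Fin N) (Fin N) ℂ) (v : EuclideanSpace ℂ (Fin N)) :
    rl A v = Matrix.toEuclideanLin A v := rfl

lemma rl_mul (A B : Matrix (Fin N) (Fin N) ℂ) (v : EuclideanSpace ℂ (Fin N)) :
    rl A (rl B v) = rl (A * B) v := by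
  rw [rl_apply, rl_apply, rl_apply]
  ext i
  simp [Matrix.toEuclideanLin, Matrix.mulVec_mulVec]

lemma re_inner_eq (v w : EuclideanSpace ℂ (Fin N)) : inner ℝ v w = (inner ℂ v w).re := by
  simp [PiLp.inner_apply]

lemma cliff_of {β : Fin n → Matrix (Fin N) (Fin N) ℂ} (h : CliffordRel β)
    (hs : ∀ j, (β j)ᴴ = - β j) : Cliff (fun j => rl (β j)) where
  sk j v w := by
    rw [re_inner_eq, re_inner_eq, rl_apply, rl_apply]
    have h1 : Matrix.toEuclideanLin (β j) = - LinearMap.adjoint (Matrix.toEuclideanLin (β j)) := by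
      rw [← Matrix.toEuclideanLin_conjTranspose_eq_adjoint, hs j, map_neg, neg_neg]
    conv_lhs => rw [h1]
    rw [LinearMap.neg_apply, inner_neg_left, LinearMap.adjoint_inner_left, Complex.neg_re]
  rel j k w := by
    rw [rl_mul, rl_mul, rl_apply, rl_apply, ← LinearMap.add_apply, ← map_add, h j k]
    by_cases hjk : j = k
    · rw [if_pos hjk, if_pos hjk, map_smul]
      have : Matrix.toEuclideanLin (1 : Matrix (Fin N) (Fin N) ℂ) w = w := by
        ext i; simp [Matrix.toEuclideanLin]
      rw [LinearMap.smul_apply, this]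
      ext i; simp
    · rw [if_neg hjk, if_neg hjk]; simp

lemma cutoff {E : Type*} [NormedAddCommGroup E] [NormedSpace ℝ E]
    (ψ : EuclideanSpace ℝ (Fin n) → E) (hψ : ContDiffOn ℝ 1 ψ (ball 0 1)) {ρ : ℝ} (h0 : 0 < ρ)
    (h1 : ρ < 1) : ∃ φ : EuclideanSpace ℝ (Fin n) → E, ContDiff ℝ 1 φ ∧ ∀ x ∈ ball 0 ρ, φ x = ψ x := by
  let f : ContDiffBump (0 : EuclideanSpace ℝ (Fin n)) := ⟨ρ, (1 + ρ) / 2, h0, by linarith⟩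
  refine ⟨fun x => f x • ψ x, ?_, ?_⟩
  · rw [contDiff_iff_contDiffAt]
    intro x
    by_cases hx : x ∈ ball (0 : EuclideanSpace ℝ (Fin n)) 1
    · exact f.contDiffAt.smul (hψ.contDiffAt (isOpen_ball.mem_nhds hx))
    · have hx' : x ∉ tsupport f := by
        rw [f.tsupport_eq]
        intro hx2
        apply hx
        rw [mem_closedBall] at hx2
        have : f.rOut = (1 + ρ) / 2 := rfl
        rw [mem_ball]; linarith
      have he := notMem_tsupport_iff_eventuallyEq.1 hx'
      refine (contDiffAt_const (c := (0:E))).congr_of_eventuallyEq ?_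
      filter_upwards [he] with y hy
      rw [hy]; simp
  · intro x hx
    have : f x = 1 := f.one_of_mem_closedBall (ball_subset_closedBall hx)
    simp [this]

lemma local_dim (hn : 2 ≤ n) (α : Fin n → Matrix (Fin N) (Fin N) ℂ)
    (hcl : CliffordRel α)
    (ψ : EuclideanSpace ℝ (Fin n) → EuclideanSpace ℂ (Fin N))
    (hreg : ContDiffOn ℝ 1 ψ (Metric.ball 0 1)) (p : ℝ) (hp : 0 ≤ p)
    (heq : ∀ x ∈ Metric.ball (0 : EuclideanSpace ℝ (Fin n)) 1,
      diracOp α ψ x = (‖ψ x‖ ^ p) • ψ x) {ρ : ℝ} (h0 : 0 < ρ) (h1 : ρ < 1)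
    (hne : ∃ x ∈ Metric.ball (0 : EuclideanSpace ℝ (Fin n)) ρ, ψ x ≠ 0) :
    dimH {x : EuclideanSpace ℝ (Fin n) | x ∈ ball (0 : EuclideanSpace ℝ (Fin n)) ρ ∧ ψ x = 0}
      ≤ ((n - 2 : ℕ) : ℝ≥0∞) := by
  obtain ⟨B, β, hB, hβ, hsk, hintg⟩ := hcl.exists_conj
  obtain ⟨φ, hφ, hφe⟩ := cutoff ψ hreg h0 h1
  have hinj : ∀ v, rl B v = 0 → v = 0 := by
    intro v hv
    obtain ⟨b, rfl⟩ := hB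
    have h2 : rl ((b⁻¹ : (Matrix (Fin N) (Fin N) ℂ)ˣ) : Matrix (Fin N) (Fin N) ℂ)
      (rl (b : Matrix (Fin N) (Fin N) ℂ) v) = v := by
      rw [rl_mul, b.inv_mul, rl_apply]
      ext i; simp [Matrix.toEuclideanLin]
    rw [← h2, hv, map_zero]
  obtain ⟨C, hC⟩ := (isCompact_closedBall (0 : EuclideanSpace ℝ (Fin n)) ρ).exists_bound_of_continuousOn
    hφ.continuous.continuousOn
  have hC0 : 0 ≤ C := (norm_nonneg _).trans (hC 0 (mem_closedBall_self h0.le))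
  have hsol : Sol (fun j => rl (β j)) (fun x => rl B (φ x)) (C ^ p) ρ := by
    refine ⟨cliff_of hβ hsk, (rl B).contDiff.comp hφ, by positivity, fun x hx => ?_⟩
    have hev : φ =ᶠ[nhds x] ψ := by
      filter_upwards [isOpen_ball.mem_nhds hx] with y hy using hφe y hy
    have hd : HasFDerivAt (fun x => rl B (φ x)) ((rl B).comp (fderiv ℝ φ x)) x :=
      (rl B).hasFDerivAt.comp x (hφ.differentiable one_ne_zero x).hasFDerivAt
    have hx1 : x ∈ ball (0 : EuclideanSpace ℝ (Fin n)) 1 := ball_subset_ball h1.le hx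
    have e : dirA (fun j => rl (β j)) (fderiv ℝ (fun x => rl B (φ x)) x) = rl B (diracOp α ψ x) := by
      rw [hd.fderiv, hev.fderiv_eq, dirA, diracOp, map_sum]
      refine Finset.sum_congr rfl fun j _ => ?_
      rw [ContinuousLinearMap.comp_apply, rl_mul, hintg j, ← rl_mul]
      rfl
    rw [e, heq x hx1, map_smul, norm_smul, ← hφe x hx, Real.norm_eq_abs, abs_of_nonneg (by positivity)]
    gcongr
    exact hC x (ball_subset_closedBall hx)
  have := hsol.dim_le hn (by
    obtain ⟨x, hx, hx0⟩ := hne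
    refine ⟨x, hx, fun hz => hx0 ?_⟩
    rw [← hφe x hx]; exact hinj _ hz)
  refine (dimH_mono ?_).trans this
  rintro x ⟨hx, hx0⟩
  refine ⟨hx, ?_⟩
  simp only [hφe x hx, hx0, map_zero]

end transfer
theorem nodal_set_dimension
    (n : ℕ) (hn : 3 ≤ n) (N : ℕ) (hN : N = 2 ^ (n / 2))
    (α : Fin n → Matrix (Fin N) (Fin N) ℂ)
    (hcl : CliffordRel α)
    (ψ : EuclideanSpace ℝ (Fin n) → EuclideanSpace ℂ (Fin N))
    -- `ψ` is `C^{1,a}` on the open unit ball for some `a ∈ (0,1)`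
    (a : ℝ≥0) (ha0 : 0 < a) (ha1 : a < 1)
    (hreg : ContDiffOn ℝ 1 ψ (Metric.ball 0 1))
    (hHol : ∃ C : ℝ≥0, HolderOnWith C a (fderiv ℝ ψ) (Metric.ball 0 1))
    -- `ψ` is not identically zero on the unit ball
    (hne : ∃ x ∈ Metric.ball (0 : EuclideanSpace ℝ (Fin n)) 1, ψ x ≠ 0)
    -- `ψ` solves the critical Dirac equation pointwise on the unit ball
    (heq : ∀ x ∈ Metric.ball (0 : EuclideanSpace ℝ (Fin n)) 1,
      diracOp α ψ x = (‖ψ x‖ ^ ((2:ℝ) / ((n:ℝ) - 1))) • ψ x) :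
    dimH {x : EuclideanSpace ℝ (Fin n) | x ∈ Metric.ball (0 : EuclideanSpace ℝ (Fin n)) 1 ∧ ψ x = 0}
      ≤ (n : ℝ≥0∞) - 2 := by
  obtain ⟨x₁, hx₁, hx₁0⟩ := hne
  rw [mem_ball_zero_iff] at hx₁
  have hn' : (3:ℝ) ≤ n := by exact_mod_cast hn
  have hp : (0:ℝ) ≤ (2:ℝ) / ((n:ℝ) - 1) := div_nonneg (by norm_num) (by linarith)
  have hρ : ∀ k : ℕ, ∃ ρ : ℝ, ρ = 1 - (1 - ‖x₁‖) * (1 / ((k:ℝ) + 2)) ∧ ‖x₁‖ < ρ ∧ ρ < 1 := by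
    intro k
    have hk : (0:ℝ) < 1 / ((k:ℝ) + 2) := by positivity
    have hk1 : 1 / ((k:ℝ) + 2) < 1 := by
      rw [div_lt_one (by positivity)]; have : (0:ℝ) ≤ k := by positivity
      linarith
    exact ⟨_, rfl, by nlinarith, by nlinarith⟩
  choose ρ hρe hρ1 hρ2 using hρ
  have hcov : {x : EuclideanSpace ℝ (Fin n) | x ∈ Metric.ball (0 : EuclideanSpace ℝ (Fin n)) 1 ∧ ψ x = 0}
      ⊆ ⋃ k, {x | x ∈ ball (0 : EuclideanSpace ℝ (Fin n)) (ρ k) ∧ ψ x = 0} := by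
    rintro x ⟨hx, hx0⟩
    rw [mem_ball_zero_iff] at hx
    obtain ⟨k, hk⟩ := exists_nat_one_div_lt (show 0 < 1 - ‖x‖ by linarith)
    rw [Set.mem_iUnion]
    refine ⟨k, ?_, hx0⟩
    rw [mem_ball_zero_iff, hρe]
    have h2 : 1 / ((k:ℝ) + 2) ≤ 1 / ((k:ℝ) + 1) := by gcongr; norm_num
    have h3 : (0:ℝ) < 1 / ((k:ℝ) + 2) := by positivity
    nlinarith [norm_nonneg x₁]
  have e : (n : ℝ≥0∞) - 2 = ((n - 2 : ℕ) : ℝ≥0∞) := by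
    rw [ENNReal.natCast_sub]; rfl
  rw [e]
  refine (dimH_mono hcov).trans ?_
  rw [dimH_iUnion]
  refine iSup_le fun k => ?_
  exact local_dim (by omega) α hcl ψ hreg _ hp heq ((norm_nonneg _).trans_lt (hρ1 k)) (hρ2 k)
    ⟨x₁, by rw [mem_ball_zero_iff]; exact hρ1 k, hx₁0⟩
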